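/- arXiv:2005.11879 — 2 statements merged into one kernel-verified Lean document; each statement's English description precedes it below -/
import Mathlib

section
/- Under the multi-layer network assumptions, there exist parameters (ε̃_n, B̃), with ε̃_n n^{1/4} → 0 as n → ∞, such that almost surely for all large n, every one of the matrices X₀, X₁, …, X_L is (ε̃_n, B̃)-orthonormal. -/
/-!
Corollary (propagation of approximate orthonormality through the network): under the
multi-layer network assumptions there are parameters `(ε̃_n, B̃)` with `ε̃_n n^{1/4} → 0`
such that almost surely, for all large `n`, every layer matrix `X₀, …, X_L` is
`(ε̃_n, B̃)`-orthonormal.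
-/

open MeasureTheory ProbabilityTheory Filter Topology Matrix

noncomputable abbrev stdGaussian : Measure ℝ := gaussianReal 0 1

noncomputable abbrev gaussianVec (d : ℕ) : Measure (Fin d → ℝ) :=
  Measure.pi fun _ => stdGaussian

noncomputable abbrev gaussianMat (a b : ℕ) : Measure (Fin a → Fin b → ℝ) :=
  Measure.pi fun _ => gaussianVec b

/-- ℓ₂→ℓ₂ operator norm of a real matrix. -/
noncomputable def opNorm {m n : ℕ} (X : Matrix (Fin m) (Fin n) ℝ) : ℝ :=
  ‖LinearMap.toContinuousLinearMap (Matrix.toEuclideanLin X)‖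

/-- `(ε,B)`-orthonormality of the columns of a matrix. -/
def IsOrthonormal {d n : ℕ} (ε B : ℝ) (X : Matrix (Fin d) (Fin n) ℝ) : Prop :=
  (∀ α : Fin n, |(∑ i, X i α ^ 2) - 1| ≤ ε) ∧
  (∀ α β : Fin n, α ≠ β → |∑ i, X i α * X i β| ≤ ε) ∧
  opNorm X ≤ B ∧
  ∑ α : Fin n, ((∑ i, X i α ^ 2) - 1) ^ 2 ≤ B ^ 2

open Classical in
/-- Integral of `f` against the empirical eigenvalue distribution of a symmetric matrix. -/
noncomputable def esd {n : ℕ} (M : Matrix (Fin n) (Fin n) ℝ) (f : ℝ → ℝ) : ℝ :=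
  if h : M.IsHermitian then (n : ℝ)⁻¹ * ∑ α, f (h.eigenvalues α) else 0

/-- The layers `X_ℓ = σ(W_ℓ X_{ℓ-1})/√d_ℓ` of the network. -/
noncomputable def netLayer (σ : ℝ → ℝ) (d : ℕ → ℕ) (n : ℕ)
    (W : (ℓ : ℕ) → Fin (d (ℓ + 1)) → Fin (d ℓ) → ℝ)
    (X0 : Matrix (Fin (d 0)) (Fin n) ℝ) : (ℓ : ℕ) → Matrix (Fin (d ℓ)) (Fin n) ℝ
  | 0 => X0
  | ℓ + 1 => (Real.sqrt (d (ℓ + 1)))⁻¹ • ((Matrix.of (W ℓ) * netLayer σ d n W X0 ℓ).map σ)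


open MeasureTheory ProbabilityTheory Filter Topology Matrix

/-- dot product with all gaussian -/
lemma oi_isGaussian (m : ℕ) : IsGaussian (gaussianVec m) := by
  have h1 : iIndepFun (fun (i : Fin m) (ω : Fin m → ℝ) => ω i) (gaussianVec m) :=
    iIndepFun_pi (X := fun _ x => x) (fun i => aemeasurable_id)
  have h2 : ∀ i : Fin m, HasGaussianLaw (fun ω : Fin m → ℝ => ω i) (gaussianVec m) := by
    intro i
    refine ⟨?_⟩
    have : (gaussianVec m).map (fun ω : Fin m → ℝ => ω i) = gaussianReal 0 1 :=
      (measurePreserving_eval (fun _ : Fin m => gaussianReal 0 1) i).map_eq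
    rw [this]; infer_instance
  have := (h1.hasGaussianLaw h2).isGaussian_map
  simpa using this

lemma oi_charfun (m : ℕ) (x : Fin m → ℝ) :
    (gaussianVec m).map (fun w => ∑ j, w j * x j) = gaussianReal 0 (∑ j, x j ^ 2).toNNReal := by
  have hm : Measurable (fun w : Fin m → ℝ => ∑ j, w j * x j) := by fun_prop
  have : IsProbabilityMeasure ((gaussianVec m).map (fun w => ∑ j, w j * x j)) :=
    Measure.isProbabilityMeasure_map hm.aemeasurable
  apply Measure.ext_of_charFun
  ext t
  rw [charFun_apply_real, integral_map hm.aemeasurable (by fun_prop), charFun_gaussianReal]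
  have h0 : ∀ w : Fin m → ℝ, Complex.exp (t * ((∑ j, w j * x j : ℝ) : ℂ) * Complex.I) =
      ∏ j, Complex.exp (((t * x j : ℝ) : ℂ) * (w j : ℂ) * Complex.I) := by
    intro w
    rw [← Complex.exp_sum]
    congr 1
    push_cast
    rw [Finset.mul_sum, Finset.sum_mul]
    refine Finset.sum_congr rfl fun j _ => by ring
  simp_rw [h0]
  rw [integral_fintype_prod_eq_prod (f := fun j (y : ℝ) => Complex.exp (((t * x j : ℝ) : ℂ) * (y : ℂ) * Complex.I))]
  have h1 : ∀ j, ∫ y : ℝ, Complex.exp (((t * x j : ℝ) : ℂ) * (y : ℂ) * Complex.I) ∂(gaussianReal 0 1)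
      = Complex.exp (- ((t * x j : ℝ) : ℂ)^2 / 2) := by
    intro j
    rw [← charFun_apply_real, charFun_gaussianReal]
    congr 1
    simp
    ring
  simp_rw [h1]
  rw [← Complex.exp_sum]
  congr 1
  have : ((∑ j, x j ^ 2).toNNReal : ℂ) = ((∑ j, x j ^ 2 : ℝ) : ℂ) := by
    have h : (0:ℝ) ≤ ∑ j, x j ^ 2 := Finset.sum_nonneg fun _ _ => sq_nonneg _
    change (((∑ j, x j ^ 2).toNNReal : ℝ) : ℂ) = _
    rw [Real.coe_toNNReal _ h]
  rw [this]
  push_cast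
  simp only [mul_zero, zero_mul, zero_sub]
  rw [Finset.sum_mul, Finset.sum_div, ← Finset.sum_neg_distrib]
  refine Finset.sum_congr rfl fun j _ => by ring

lemma oi_map_scale (m : ℕ) (x : Fin m → ℝ) :
    (gaussianVec m).map (fun w => ∑ j, w j * x j) =
      (gaussianReal 0 1).map (fun s => Real.sqrt (∑ j, x j ^ 2) * s) := by
  rw [oi_charfun, gaussianReal_map_const_mul]
  congr 1
  · simp
  · ext
    have h : (0:ℝ) ≤ ∑ j, x j ^ 2 := Finset.sum_nonneg fun _ _ => sq_nonneg _
    simp [Real.sq_sqrt h, h]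

lemma oi_integral_dot {m : ℕ} (x : Fin m → ℝ) (h : ℝ → ℝ) (hh : Measurable h) :
    ∫ w, h (∑ j, w j * x j) ∂(gaussianVec m) = ∫ s, h (Real.sqrt (∑ j, x j ^ 2) * s) ∂(gaussianReal 0 1) := by
  have hm : Measurable (fun w : Fin m → ℝ => ∑ j, w j * x j) := by fun_prop
  have h1 := integral_map (μ := gaussianVec m) hm.aemeasurable (f := h) hh.aestronglyMeasurable
  rw [← h1, oi_map_scale, integral_map (by fun_prop) hh.aestronglyMeasurable]

lemma oi_lintegral_dot {m : ℕ} (x : Fin m → ℝ) (h : ℝ → ENNReal) (hh : Measurable h) :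
    ∫⁻ w, h (∑ j, w j * x j) ∂(gaussianVec m) = ∫⁻ s, h (Real.sqrt (∑ j, x j ^ 2) * s) ∂(gaussianReal 0 1) := by
  have hm : Measurable (fun w : Fin m → ℝ => ∑ j, w j * x j) := by fun_prop
  rw [← lintegral_map (μ := gaussianVec m) hh hm, oi_map_scale, lintegral_map hh (by fun_prop)]

lemma oi_lintegral_exp (m : ℕ) (a : Fin m → ℝ) :
    ∫⁻ w, ENNReal.ofReal (Real.exp (∑ j, a j * w j)) ∂(gaussianVec m) =
      ENNReal.ofReal (Real.exp ((∑ j, a j ^ 2) / 2)) := by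
  have := oi_lintegral_dot a (fun s => ENNReal.ofReal (Real.exp s)) (by fun_prop)
  simp_rw [mul_comm (a _)]
  rw [this, ← ofReal_integral_eq_lintegral_ofReal (integrable_exp_mul_gaussianReal _)
    (ae_of_all _ fun s => (Real.exp_pos _).le)]
  have h2 := congrFun (mgf_id_gaussianReal (μ := 0) (v := 1)) (Real.sqrt (∑ j, a j ^ 2))
  simp only [mgf, id] at h2
  rw [h2]
  have h : (0:ℝ) ≤ ∑ j, a j ^ 2 := Finset.sum_nonneg fun _ _ => sq_nonneg _
  simp [Real.sq_sqrt h]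

lemma oi_mean (m : ℕ) : (gaussianVec m)[id] = 0 := by
  have := oi_isGaussian m
  ext i
  have h := (ContinuousLinearMap.proj (R := ℝ) (φ := fun _ : Fin m => ℝ) i).integral_comp_comm
    (IsGaussian.integrable_id (μ := gaussianVec m))
  simp only [ContinuousLinearMap.proj_apply, id] at h
  simp only [id, Pi.zero_apply]
  rw [← h]
  have := (measurePreserving_eval (fun _ : Fin m => gaussianReal 0 1) i).map_eq
  have h3 := integral_map (μ := gaussianVec m) (φ := Function.eval i) (measurable_pi_apply i).aemeasurable (f := fun s : ℝ => s) (by fun_prop)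
  rw [this] at h3
  simp only [Function.eval] at h3
  rw [← h3, integral_id_gaussianReal]

lemma oi_rot (m : ℕ) (θ : ℝ) :
    ((gaussianVec m).prod (gaussianVec m)).map (ContinuousLinearMap.rotation θ) =
      (gaussianVec m).prod (gaussianVec m) := by
  have := oi_isGaussian m
  exact IsGaussian.map_rotation_eq_self (oi_mean m) θ

lemma oi_jensen {α : Type*} [MeasurableSpace α] (ν : Measure α) [IsProbabilityMeasure ν] (f : α → ℝ)
    (hf : Integrable f ν) :
    ENNReal.ofReal (Real.exp (∫ a, f a ∂ν)) ≤ ∫⁻ a, ENNReal.ofReal (Real.exp (f a)) ∂ν := by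
  by_cases h : Integrable (fun a => Real.exp (f a)) ν
  · rw [← ofReal_integral_eq_lintegral_ofReal h (ae_of_all _ fun s => (Real.exp_pos _).le)]
    exact ENNReal.ofReal_le_ofReal (convexOn_exp.map_integral_le Real.continuous_exp.continuousOn isClosed_univ
      (ae_of_all _ fun _ => Set.mem_univ _) hf h)
  · have : ∫⁻ a, ENNReal.ofReal (Real.exp (f a)) ∂ν = ⊤ := by
      by_contra hne
      apply h
      refine (lintegral_ofReal_ne_top_iff_integrable ?_ ?_).1 hne
      · exact (Real.continuous_exp.comp_aestronglyMeasurable hf.1)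
      · exact ae_of_all _ fun s => (Real.exp_pos _).le
    rw [this]; exact le_top

open MeasureTheory ProbabilityTheory Filter Topology Matrix

lemma oi_MP_path {m : ℕ} (f : (Fin m → ℝ) → ℝ) (G : (Fin m → ℝ) → Fin m → ℝ)
    (hGc : Continuous G)
    (hd : ∀ x y θ, HasDerivAt (fun θ : ℝ => f (Real.cos θ • x + Real.sin θ • y))
      (∑ j, G (Real.cos θ • x + Real.sin θ • y) j * (-Real.sin θ • x + Real.cos θ • y) j) θ) (t : ℝ)
    (x y : Fin m → ℝ) :
    ENNReal.ofReal (Real.exp (t * (f y - f x))) ≤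
      ∫⁻ θ, ENNReal.ofReal (Real.exp (t * (Real.pi / 2) *
        ∑ j, G (Real.cos θ • x + Real.sin θ • y) j * (-Real.sin θ • x + Real.cos θ • y) j))
        ∂((ENNReal.ofReal (Real.pi / 2))⁻¹ • volume.restrict (Set.Ioc 0 (Real.pi / 2))) := by
  have hpi := Real.pi_pos
  set ν : Measure ℝ := (ENNReal.ofReal (Real.pi / 2))⁻¹ • volume.restrict (Set.Ioc 0 (Real.pi / 2)) with hν
  have : IsProbabilityMeasure ν := by
    constructor
    simp only [hν, Measure.smul_apply, Measure.restrict_apply MeasurableSet.univ, Set.univ_inter,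
      Real.volume_Ioc, sub_zero, smul_eq_mul]
    exact ENNReal.inv_mul_cancel (by simp; positivity) ENNReal.ofReal_ne_top
  have hGj : ∀ j, Continuous fun θ : ℝ => G (Real.cos θ • x + Real.sin θ • y) j := fun j =>
    (continuous_apply j).comp (hGc.comp (by fun_prop))
  have hc : Continuous (fun θ : ℝ => ∑ j, G (Real.cos θ • x + Real.sin θ • y) j * (-Real.sin θ • x + Real.cos θ • y) j) := by
    refine continuous_finsetSum _ fun j _ => (hGj j).mul ?_
    simp only [Pi.add_apply, Pi.smul_apply, smul_eq_mul]
    fun_prop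
  have hi := intervalIntegral.integral_eq_sub_of_hasDerivAt (a := 0) (b := Real.pi / 2)
    (fun θ _ => hd x y θ) (hc.intervalIntegrable _ _)
  simp only [Real.cos_pi_div_two, Real.sin_pi_div_two, Real.cos_zero, Real.sin_zero, zero_smul, one_smul,
    zero_add, add_zero] at hi
  have hint : IntegrableOn (fun θ : ℝ => ∑ j, G (Real.cos θ • x + Real.sin θ • y) j * (-Real.sin θ • x + Real.cos θ • y) j) (Set.Ioc 0 (Real.pi/2)) volume :=
    (intervalIntegrable_iff_integrableOn_Ioc_of_le (by positivity)).1 (hc.intervalIntegrable _ _)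
  have hint' : Integrable (fun θ : ℝ => t * (Real.pi / 2) * ∑ j, G (Real.cos θ • x + Real.sin θ • y) j * (-Real.sin θ • x + Real.cos θ • y) j) ν := by
    refine Integrable.const_mul ?_ _
    exact Integrable.smul_measure hint (by simp; positivity)
  have hJ := oi_jensen ν _ hint'
  refine le_trans (le_of_eq ?_) hJ
  congr 2
  rw [integral_const_mul, hν, integral_smul_measure, ← intervalIntegral.integral_of_le (by positivity), hi,
    ENNReal.toReal_inv, ENNReal.toReal_ofReal (by positivity), smul_eq_mul]
  field_simp

theorem oi_MP {m : ℕ} (f : (Fin m → ℝ) → ℝ) (G : (Fin m → ℝ) → Fin m → ℝ)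
    (hGc : Continuous G) (hint : Integrable f (gaussianVec m))
    (hd : ∀ x y θ, HasDerivAt (fun θ : ℝ => f (Real.cos θ • x + Real.sin θ • y))
      (∑ j, G (Real.cos θ • x + Real.sin θ • y) j * (-Real.sin θ • x + Real.cos θ • y) j) θ) (t : ℝ) :
    ∫⁻ w, ENNReal.ofReal (Real.exp (t * (f w - ∫ z, f z ∂(gaussianVec m)))) ∂(gaussianVec m) ≤
      ∫⁻ w, ENNReal.ofReal (Real.exp (t ^ 2 * (Real.pi ^ 2 / 8) * ∑ j, G w j ^ 2)) ∂(gaussianVec m) := by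
  have hpi := Real.pi_pos
  set μ := gaussianVec m
  set ν : Measure ℝ := (ENNReal.ofReal (Real.pi / 2))⁻¹ • volume.restrict (Set.Ioc 0 (Real.pi / 2)) with hν
  have : IsProbabilityMeasure ν := by
    constructor
    simp only [hν, Measure.smul_apply, Measure.restrict_apply MeasurableSet.univ, Set.univ_inter,
      Real.volume_Ioc, sub_zero, smul_eq_mul]
    exact ENNReal.inv_mul_cancel (by simp; positivity) ENNReal.ofReal_ne_top
  set Φ : (Fin m → ℝ) × (Fin m → ℝ) → ENNReal := fun p =>
    ENNReal.ofReal (Real.exp (t * (Real.pi / 2) * ∑ j, G p.1 j * p.2 j)) with hΦ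
  have hGj : ∀ j, Continuous fun x => G x j := fun j => (continuous_apply j).comp hGc
  have hΦc : Continuous Φ := by
    refine ENNReal.continuous_ofReal.comp (Real.continuous_exp.comp (continuous_const.mul ?_))
    exact continuous_finsetSum _ fun j _ => ((hGj j).comp continuous_fst).mul ((continuous_apply j).comp continuous_snd)
  have step1 : ∀ w, ENNReal.ofReal (Real.exp (t * (f w - ∫ z, f z ∂μ))) ≤
      ∫⁻ x, ENNReal.ofReal (Real.exp (t * (f w - f x))) ∂μ := by
    intro w
    have hi : Integrable (fun x => t * (f w - f x)) μ := ((integrable_const _).sub hint).const_mul _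
    have := oi_jensen μ _ hi
    rw [integral_const_mul, integral_sub (integrable_const _) hint] at this
    simpa using this
  have step2 : ∀ w x, ENNReal.ofReal (Real.exp (t * (f w - f x))) ≤
      ∫⁻ θ, Φ (ContinuousLinearMap.rotation θ (x, w)) ∂ν := by
    intro w x
    refine (oi_MP_path f G hGc hd t x w).trans (le_of_eq ?_)
    refine lintegral_congr fun θ => ?_
    simp only [hΦ, ContinuousLinearMap.rotation_apply]
  have hcont : Continuous (fun q : ((Fin m → ℝ) × (Fin m → ℝ)) × ℝ => Φ (ContinuousLinearMap.rotation q.2 q.1)) := by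
    refine hΦc.comp ?_
    simp only [ContinuousLinearMap.rotation_apply]
    fun_prop
  calc ∫⁻ w, ENNReal.ofReal (Real.exp (t * (f w - ∫ z, f z ∂μ))) ∂μ
      ≤ ∫⁻ w, ∫⁻ x, ENNReal.ofReal (Real.exp (t * (f w - f x))) ∂μ ∂μ := lintegral_mono step1
    _ ≤ ∫⁻ w, ∫⁻ x, ∫⁻ θ, Φ (ContinuousLinearMap.rotation θ (x, w)) ∂ν ∂μ ∂μ :=
        lintegral_mono fun w => lintegral_mono fun x => step2 w x
    _ = ∫⁻ p, ∫⁻ θ, Φ (ContinuousLinearMap.rotation θ p) ∂ν ∂(μ.prod μ) := by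
        rw [lintegral_prod_symm _ ?_]
        exact (Measurable.lintegral_prod_right' (f := fun q : ((Fin m → ℝ) × (Fin m → ℝ)) × ℝ => Φ (ContinuousLinearMap.rotation q.2 q.1)) hcont.measurable).aemeasurable
    _ = ∫⁻ θ, ∫⁻ p, Φ (ContinuousLinearMap.rotation θ p) ∂(μ.prod μ) ∂ν := by
        rw [lintegral_lintegral_swap]
        exact hcont.measurable.aemeasurable
    _ = ∫⁻ θ, ∫⁻ p, Φ p ∂(μ.prod μ) ∂ν := by
        refine lintegral_congr fun θ => ?_
        conv_rhs => rw [← oi_rot m θ]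
        rw [lintegral_map hΦc.measurable (ContinuousLinearMap.continuous _).measurable]
    _ = ∫⁻ p, Φ p ∂(μ.prod μ) := by simp
    _ = ∫⁻ x, ∫⁻ y, Φ (x, y) ∂μ ∂μ := lintegral_prod _ hΦc.measurable.aemeasurable
    _ = _ := by
        refine lintegral_congr fun x => ?_
        have := oi_lintegral_exp m (fun j => t * (Real.pi / 2) * G x j)
        simp only [hΦ]
        simp_rw [Finset.mul_sum, ← mul_assoc]
        rw [this]
        congr 2
        rw [Finset.sum_div]
        refine Finset.sum_congr rfl fun j _ => by ring

open MeasureTheory ProbabilityTheory Filter Topology Matrix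

/-- the preactivations -/
noncomputable def oiG {m n : ℕ} (X : Matrix (Fin m) (Fin n) ℝ) (w : Fin m → ℝ) (α : Fin n) : ℝ :=
  ∑ j, w j * X j α

lemma oiG_continuous {m n : ℕ} (X : Matrix (Fin m) (Fin n) ℝ) : Continuous (oiG X) := by
  unfold oiG; fun_prop

lemma oi_opNorm_nonneg {m n : ℕ} (X : Matrix (Fin m) (Fin n) ℝ) : 0 ≤ opNorm X := norm_nonneg _

lemma oi_opNorm_bound {m n : ℕ} (X : Matrix (Fin m) (Fin n) ℝ) (p : Fin n → ℝ) :
    ∑ j, (∑ α, X j α * p α) ^ 2 ≤ opNorm X ^ 2 * ∑ α, p α ^ 2 := by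
  have h := (LinearMap.toContinuousLinearMap (Matrix.toEuclideanLin X)).le_opNorm (WithLp.toLp 2 p)
  have h2 := pow_le_pow_left₀ (norm_nonneg _) h 2
  rw [mul_pow, EuclideanSpace.real_norm_sq_eq, EuclideanSpace.real_norm_sq_eq] at h2
  simpa [opNorm, Matrix.toEuclideanLin, Matrix.mulVec, dotProduct] using h2

lemma oi_opNorm_le {m n : ℕ} (X : Matrix (Fin m) (Fin n) ℝ) (B : ℝ) (hB : 0 ≤ B)
    (h : ∀ p : EuclideanSpace ℝ (Fin n), ‖Matrix.toEuclideanLin X p‖ ≤ B * ‖p‖) : opNorm X ≤ B :=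
  ContinuousLinearMap.opNorm_le_bound _ hB (fun p => by simpa using h p)

theorem oi_MPX {m n : ℕ} (X : Matrix (Fin m) (Fin n) ℝ) (B : ℝ) (hX : opNorm X ≤ B)
    (F : (Fin n → ℝ) → ℝ) (p : (Fin n → ℝ) → Fin n → ℝ) (hp : Continuous p)
    (hint : Integrable (fun w => F (oiG X w)) (gaussianVec m))
    (hd : ∀ (c c' : ℝ → Fin n → ℝ) (θ : ℝ), (∀ α, HasDerivAt (fun θ => c θ α) (c' θ α) θ) →
      HasDerivAt (fun θ => F (c θ)) (∑ α, p (c θ) α * c' θ α) θ) (t : ℝ) :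
    ∫⁻ w, ENNReal.ofReal (Real.exp (t * (F (oiG X w) - ∫ z, F (oiG X z) ∂(gaussianVec m)))) ∂(gaussianVec m) ≤
      ∫⁻ w, ENNReal.ofReal (Real.exp (t ^ 2 * (Real.pi ^ 2 / 8) * (B ^ 2 * ∑ α, p (oiG X w) α ^ 2))) ∂(gaussianVec m) := by
  refine (oi_MP (fun w => F (oiG X w)) (fun w j => ∑ α, X j α * p (oiG X w) α) ?_ hint ?_ t).trans ?_
  · have := oiG_continuous X
    refine continuous_pi fun j => continuous_finsetSum _ fun α _ => continuous_const.mul ?_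
    exact (continuous_apply α).comp (hp.comp this)
  · intro x y θ
    have := hd (fun θ => oiG X (Real.cos θ • x + Real.sin θ • y)) (fun θ => oiG X (-Real.sin θ • x + Real.cos θ • y)) θ ?_
    · convert this using 1
      simp only [oiG, Finset.mul_sum, Finset.sum_mul]
      rw [Finset.sum_comm]
      refine Finset.sum_congr rfl fun α _ => Finset.sum_congr rfl fun j _ => by ring
    · intro α
      simp only [oiG]
      refine HasDerivAt.fun_sum fun j _ => ?_
      refine HasDerivAt.mul_const ?_ _
      simp only [Pi.add_apply, Pi.smul_apply, smul_eq_mul]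
      exact ((Real.hasDerivAt_cos θ).mul_const (x j)).add ((Real.hasDerivAt_sin θ).mul_const (y j))
  · refine lintegral_mono fun w => ENNReal.ofReal_le_ofReal (Real.exp_le_exp.2 ?_)
    refine mul_le_mul_of_nonneg_left ?_ (by positivity)
    refine (oi_opNorm_bound X _).trans ?_
    have := oi_opNorm_nonneg X
    gcongr

/-! Chernoff bound for independent rows -/
lemma oi_chernoff {m d : ℕ} (h : Fin d → (Fin m → ℝ) → ℝ) (hm : ∀ i, Measurable (h i)) (a : Fin d → ℝ) (A : ℝ)
    (hh : ∀ i, ∫⁻ w, ENNReal.ofReal (Real.exp (h i w)) ∂(gaussianVec m) ≤ ENNReal.ofReal (Real.exp (a i))) :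
    gaussianMat d m {W | A ≤ ∑ i, h i (W i)} ≤ ENNReal.ofReal (Real.exp (∑ i, a i - A)) := by
  have hmeas : ∀ i, Measurable fun w => ENNReal.ofReal (Real.exp (h i w)) := fun i =>
    ENNReal.measurable_ofReal.comp (Real.measurable_exp.comp (hm i))
  have hind : iIndepFun (fun (i : Fin d) (W : Fin d → Fin m → ℝ) => ENNReal.ofReal (Real.exp (h i (W i)))) (gaussianMat d m) :=
    iIndepFun_pi (X := fun i w => ENNReal.ofReal (Real.exp (h i w))) (fun i => (hmeas i).aemeasurable)
  have hprod := lintegral_prod_eq_prod_lintegral_of_indepFun Finset.univ _ hind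
    (fun i => (hmeas i).comp (measurable_pi_apply i))
  have h1 : ∀ i, ∫⁻ W, ENNReal.ofReal (Real.exp (h i (W i))) ∂(gaussianMat d m) = ∫⁻ w, ENNReal.ofReal (Real.exp (h i w)) ∂(gaussianVec m) := by
    intro i
    exact (measurePreserving_eval (fun _ : Fin d => gaussianVec m) i).lintegral_comp (hmeas i)
  have h2 : ∫⁻ W, ENNReal.ofReal (Real.exp (∑ i, h i (W i))) ∂(gaussianMat d m) ≤ ENNReal.ofReal (Real.exp (∑ i, a i)) := by
    have e : ∀ W : Fin d → Fin m → ℝ, ENNReal.ofReal (Real.exp (∑ i, h i (W i))) = ∏ i, ENNReal.ofReal (Real.exp (h i (W i))) := by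
      intro W
      rw [Real.exp_sum, ENNReal.ofReal_prod_of_nonneg (fun i _ => (Real.exp_pos _).le)]
    simp_rw [e]
    rw [hprod, Real.exp_sum, ENNReal.ofReal_prod_of_nonneg (fun i _ => (Real.exp_pos _).le)]
    refine Finset.prod_le_prod' fun i _ => ?_
    rw [h1]; exact hh i
  have h3 : gaussianMat d m {W | A ≤ ∑ i, h i (W i)} ≤
      gaussianMat d m {W | ENNReal.ofReal (Real.exp A) ≤ ENNReal.ofReal (Real.exp (∑ i, h i (W i)))} := by
    refine measure_mono fun W hW => ENNReal.ofReal_le_ofReal (Real.exp_le_exp.2 hW)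
  refine h3.trans ((meas_ge_le_lintegral_div ?_ ?_ ENNReal.ofReal_ne_top).trans ?_)
  · exact (ENNReal.measurable_ofReal.comp (Real.measurable_exp.comp (Finset.measurable_sum _ fun i _ => (hm i).comp (measurable_pi_apply i)))).aemeasurable
  · simp [Real.exp_pos]
  · rw [Real.exp_sub, ENNReal.ofReal_div_of_pos (Real.exp_pos _)]
    gcongr

open MeasureTheory ProbabilityTheory Filter Topology Matrix

lemma oi_net (n : ℕ) : ∃ N : Finset (EuclideanSpace ℝ (Fin n)), N.card ≤ 5 ^ n ∧ (∀ v ∈ N, ‖v‖ ≤ 1) ∧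
    ∀ x : EuclideanSpace ℝ (Fin n), ‖x‖ ≤ 1 → ∃ v ∈ N, ‖x - v‖ ≤ 1 / 2 := by
  classical
  let P : Finset (EuclideanSpace ℝ (Fin n)) → Prop := fun s => (∀ c ∈ s, ‖c‖ ≤ 2) ∧ ∀ c ∈ s, ∀ d ∈ s, c ≠ d → 1 ≤ ‖c - d‖
  have hcard : ∀ s, P s → s.card ≤ 5 ^ n := by
    intro s hs
    have := Besicovitch.card_le_of_separated s hs.1 hs.2
    simpa using this
  let S : Set ℕ := {k | ∃ s, P s ∧ s.card = k}
  have hne : S.Nonempty := ⟨0, ∅, by simp [P], by simp⟩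
  have hbd : BddAbove S := ⟨5 ^ n, by rintro k ⟨s, hs, rfl⟩; exact hcard s hs⟩
  obtain ⟨s, hs, hsk⟩ := Nat.sSup_mem hne hbd
  refine ⟨s.image (fun c => (1 / 2 : ℝ) • c), Finset.card_image_le.trans (hcard s hs), ?_, ?_⟩
  · intro v hv
    obtain ⟨c, hc, rfl⟩ := Finset.mem_image.1 hv
    have := hs.1 c hc
    rw [norm_smul]; norm_num; linarith
  · intro x hx
    by_contra hcon
    push Not at hcon
    have hfar : ∀ c ∈ s, 1 ≤ ‖(2 : ℝ) • x - c‖ := by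
      intro c hc
      have := hcon _ (Finset.mem_image_of_mem _ hc)
      have e : (2 : ℝ) • x - c = (2 : ℝ) • (x - (1 / 2 : ℝ) • c) := by
        rw [smul_sub, smul_smul]; norm_num
      rw [e, norm_smul]; norm_num
      norm_num at this
      linarith
    have hnot : (2 : ℝ) • x ∉ s := by
      intro h
      have := hfar _ h
      simp at this
      linarith
    have hP : P (insert ((2 : ℝ) • x) s) := by
      constructor
      · intro c hc
        rcases Finset.mem_insert.1 hc with rfl | hc
        · rw [norm_smul]; norm_num; linarith
        · exact hs.1 c hc
      · intro c hc d hd hcd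
        rcases Finset.mem_insert.1 hc with rfl | hc <;> rcases Finset.mem_insert.1 hd with rfl | hd
        · exact absurd rfl hcd
        · exact hfar d hd
        · rw [norm_sub_rev]; exact hfar c hc
        · exact hs.2 c hc d hd hcd
    have := le_csSup hbd (show (insert ((2 : ℝ) • x) s).card ∈ S from ⟨_, hP, rfl⟩)
    rw [Finset.card_insert_of_notMem hnot, hsk] at this
    omega

lemma oi_net_vec {n : ℕ} (N : Finset (EuclideanSpace ℝ (Fin n)))
    (hN : ∀ x : EuclideanSpace ℝ (Fin n), ‖x‖ ≤ 1 → ∃ v ∈ N, ‖x - v‖ ≤ 1 / 2)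
    (z : EuclideanSpace ℝ (Fin n)) (τ : ℝ) (h : ∀ v ∈ N, ∑ i, v i * z i ≤ τ) : ‖z‖ ≤ 2 * τ := by
  by_cases hz : z = 0
  · obtain ⟨v, hv, _⟩ := hN 0 (by simp)
    have := h v hv
    subst hz
    simp at this ⊢
    linarith
  have hz' : 0 < ‖z‖ := norm_pos_iff.2 hz
  obtain ⟨v, hv, hvx⟩ := hN (‖z‖⁻¹ • z) (by rw [norm_smul]; simp [hz'.ne'])
  have h1 : inner ℝ (‖z‖⁻¹ • z) z = ‖z‖ := by
    rw [real_inner_smul_left, real_inner_self_eq_norm_sq]; field_simp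
  have h2 : inner ℝ v z ≤ τ := by
    refine le_trans (le_of_eq ?_) (h v hv)
    simp [PiLp.inner_apply, mul_comm]
  have h3 : inner ℝ (‖z‖⁻¹ • z - v) z ≤ 1 / 2 * ‖z‖ :=
    (real_inner_le_norm _ _).trans (by gcongr)
  rw [inner_sub_left] at h3
  linarith

lemma oi_net_op {m n : ℕ} (N : Finset (EuclideanSpace ℝ (Fin n)))
    (hN : ∀ x : EuclideanSpace ℝ (Fin n), ‖x‖ ≤ 1 → ∃ v ∈ N, ‖x - v‖ ≤ 1 / 2)
    (M : Finset (EuclideanSpace ℝ (Fin m)))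
    (hM : ∀ x : EuclideanSpace ℝ (Fin m), ‖x‖ ≤ 1 → ∃ v ∈ M, ‖x - v‖ ≤ 1 / 2)
    (Y : Matrix (Fin m) (Fin n) ℝ) (τ : ℝ) (hτ : 0 ≤ τ)
    (h : ∀ v ∈ N, ∀ u ∈ M, ∑ i, u i * ∑ α, Y i α * v α ≤ τ) : opNorm Y ≤ 4 * τ := by
  set T := LinearMap.toContinuousLinearMap (Matrix.toEuclideanLin Y) with hT
  have h1 : ∀ v ∈ N, ‖T v‖ ≤ 2 * τ := by
    intro v hv
    refine oi_net_vec M hM _ τ fun u hu => ?_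
    simpa [hT, Matrix.toEuclideanLin, Matrix.mulVec, dotProduct] using h v hv u hu
  have h2 : ‖T‖ ≤ 2 * τ + ‖T‖ * (1 / 2) := by
    refine ContinuousLinearMap.opNorm_le_of_unit_norm (by positivity) fun x hx => ?_
    obtain ⟨v, hv, hvx⟩ := hN x hx.le
    have e : T x = T v + T (x - v) := by rw [map_sub]; abel
    rw [e]
    refine (norm_add_le _ _).trans (add_le_add (h1 v hv) ?_)
    exact (T.le_opNorm _).trans (by gcongr)
  change ‖T‖ ≤ _
  linarith

open MeasureTheory ProbabilityTheory Filter Topology Matrix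

lemma oi_exp_sq_integrable : Integrable (fun s : ℝ => Real.exp (s ^ 2 / 4)) (gaussianReal 0 1) := by
  rw [gaussianReal_of_var_ne_zero 0 one_ne_zero]
  rw [integrable_withDensity_iff (measurable_gaussianPDF 0 1) (ae_of_all _ fun _ => gaussianPDF_lt_top)]
  have h := (integrable_exp_neg_mul_sq (b := 1 / 4) (by norm_num)).const_mul ((Real.sqrt (2 * Real.pi * 1))⁻¹)
  refine h.congr (ae_of_all _ fun s => ?_)
  simp only [toReal_gaussianPDF, gaussianPDFReal, sub_zero, NNReal.coe_one]
  rw [mul_left_comm, ← Real.exp_add]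
  congr 2
  ring

lemma oi_jensen_fin {n : ℕ} (w a : Fin n → ℝ) (hw : ∀ α, 0 ≤ w α) (hw1 : ∑ α, w α ≤ 1) :
    Real.exp (∑ α, w α * a α) ≤ (1 - ∑ α, w α) + ∑ α, w α * Real.exp (a α) := by
  have := convexOn_exp.map_sum_le (t := (Finset.univ : Finset (Option (Fin n))))
    (w := fun o => o.elim (1 - ∑ α, w α) w) (p := fun o => o.elim 0 a)
    (by rintro (_ | α) _ <;> simp [hw, hw1]) (by simp [Fintype.sum_option]) (by simp)
  simpa [Fintype.sum_option] using this

section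
variable {m : ℕ}

lemma oi_dot_law (x : Fin m → ℝ) : HasGaussianLaw (fun w : Fin m → ℝ => ∑ j, w j * x j) (gaussianVec m) := by
  refine ⟨?_⟩
  rw [oi_charfun]; infer_instance

lemma oi_dot_memLp (x : Fin m → ℝ) : MemLp (fun w : Fin m → ℝ => ∑ j, w j * x j) 2 (gaussianVec m) :=
  (oi_dot_law x).memLp_two

lemma oi_gauss_sq : ∫ s, s ^ 2 ∂(gaussianReal 0 1) = 1 := by
  have h := variance_id_gaussianReal (μ := 0) (v := 1)
  rw [variance_eq_sub (memLp_id_gaussianReal' 2 (by simp))] at h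
  simp only [Pi.pow_apply, id] at h
  rw [integral_id_gaussianReal] at h
  simpa using h

lemma oi_dot_sq (x : Fin m → ℝ) : ∫ w, (∑ j, w j * x j) ^ 2 ∂(gaussianVec m) = ∑ j, x j ^ 2 := by
  rw [oi_integral_dot x (fun s => s ^ 2) (by fun_prop)]
  simp_rw [mul_pow]
  rw [integral_const_mul, oi_gauss_sq, Real.sq_sqrt (Finset.sum_nonneg fun _ _ => sq_nonneg _), mul_one]

lemma oi_dot_mean (x : Fin m → ℝ) : ∫ w, (∑ j, w j * x j) ∂(gaussianVec m) = 0 := by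
  rw [oi_integral_dot x (fun s => s) (by fun_prop), integral_const_mul, integral_id_gaussianReal, mul_zero]

lemma oi_dot_abs (x : Fin m → ℝ) : ∫ w, |∑ j, w j * x j| ∂(gaussianVec m) ≤ (1 + ∑ j, x j ^ 2) / 2 := by
  have h1 := oi_dot_sq x
  have hi := (oi_dot_memLp x).integrable_sq
  have : ∫ w, |∑ j, w j * x j| ∂(gaussianVec m) ≤ ∫ w, (1 + (∑ j, w j * x j) ^ 2) / 2 ∂(gaussianVec m) := by
    refine integral_mono ((oi_dot_memLp x).integrable (by norm_num)).abs
      (((integrable_const _).add hi).div_const _) fun w => ?_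
    have := sq_nonneg (|∑ j, w j * x j| - 1)
    have h2 := sq_abs (∑ j, w j * x j)
    simp only
    nlinarith
  refine this.trans (le_of_eq ?_)
  rw [integral_div, integral_add (integrable_const _) hi, h1]
  simp

lemma oi_dot_cov (x z : Fin m → ℝ) :
    ∫ w, (∑ j, w j * x j) * (∑ j, w j * z j) ∂(gaussianVec m) = ∑ j, x j * z j := by
  have h1 := oi_dot_sq (fun j => x j + z j)
  have h2 := oi_dot_sq x
  have h3 := oi_dot_sq z
  have hx := oi_dot_memLp x
  have hz := oi_dot_memLp z
  have e : ∀ w : Fin m → ℝ, (∑ j, w j * (x j + z j)) ^ 2 = (∑ j, w j * x j) ^ 2 + (∑ j, w j * z j) ^ 2 + 2 * ((∑ j, w j * x j) * (∑ j, w j * z j)) := by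
    intro w
    simp_rw [mul_add, Finset.sum_add_distrib]
    ring
  simp_rw [e] at h1
  have ix : Integrable (fun w : Fin m → ℝ => (∑ j, w j * x j) ^ 2) (gaussianVec m) := hx.integrable_sq
  have iz : Integrable (fun w : Fin m → ℝ => (∑ j, w j * z j) ^ 2) (gaussianVec m) := hz.integrable_sq
  have ixz : Integrable (fun w : Fin m → ℝ => 2 * ((∑ j, w j * x j) * (∑ j, w j * z j))) (gaussianVec m) :=
    (hx.integrable_mul hz).const_mul 2
  have ia : Integrable (fun w : Fin m → ℝ => (∑ j, w j * x j) ^ 2 + (∑ j, w j * z j) ^ 2) (gaussianVec m) := ix.add iz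
  rw [integral_add ia ixz, integral_add ix iz, integral_const_mul, h2, h3] at h1
  have e2 : ∑ j, (x j + z j) ^ 2 = ∑ j, x j ^ 2 + ∑ j, z j ^ 2 + 2 * ∑ j, x j * z j := by
    rw [Finset.mul_sum, ← Finset.sum_add_distrib, ← Finset.sum_add_distrib]
    exact Finset.sum_congr rfl fun j _ => by ring
  linarith

lemma oi_dot_indep (x z : Fin m → ℝ) (h : ∑ j, x j * z j = 0) :
    IndepFun (fun w : Fin m → ℝ => ∑ j, w j * x j) (fun w : Fin m → ℝ => ∑ j, w j * z j) (gaussianVec m) := by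
  have := oi_isGaussian m
  refine HasGaussianLaw.indepFun_of_covariance_eq_zero ?_ ?_
  · let L : (Fin m → ℝ) →L[ℝ] ℝ × ℝ :=
      (∑ j, x j • ContinuousLinearMap.proj (R := ℝ) (φ := fun _ : Fin m => ℝ) j).prod
        (∑ j, z j • ContinuousLinearMap.proj (R := ℝ) (φ := fun _ : Fin m => ℝ) j)
    have h1 := (IsGaussian.hasGaussianLaw_id (μ := gaussianVec m)).map L
    have e : (fun w : Fin m → ℝ => (∑ j, w j * x j, ∑ j, w j * z j)) = L ∘ id := by
      funext w
      simp [L, mul_comm]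
    rw [e]
    exact h1
  · rw [covariance_eq_sub (oi_dot_memLp x) (oi_dot_memLp z), oi_dot_mean]
    simp only [Pi.mul_apply]
    rw [oi_dot_cov, h]; simp

end

section
variable {m n : ℕ} {σ : ℝ → ℝ} {lam : ℝ}

lemma oi_memLp_aff {Ω : Type*} [MeasurableSpace Ω] {μ : Measure Ω} [IsFiniteMeasure μ] {f : Ω → ℝ}
    (hf : MemLp f 2 μ) (a b : ℝ) : MemLp (fun w => a + b * |f w|) 2 μ := by
  have h1 : MemLp (fun w => ‖f w‖) 2 μ := hf.norm
  have h2 : MemLp (fun w => b * ‖f w‖) 2 μ := h1.const_mul b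
  have h3 : MemLp (fun _ : Ω => a) 2 μ := memLp_const a
  exact h3.add h2

lemma oi_growth (hl : 0 ≤ lam) (hL : ∀ x y, |σ x - σ y| ≤ lam * |x - y|) (x : ℝ) : |σ x| ≤ |σ 0| + lam * |x| := by
  have h1 := hL x 0
  have h2 := abs_sub_abs_le_abs_sub (σ x) (σ 0)
  rw [sub_zero] at h1
  linarith

lemma oi_sig_memLp (hl : 0 ≤ lam) (hL : ∀ x y, |σ x - σ y| ≤ lam * |x - y|) (hc : Continuous σ) (x : Fin m → ℝ) :
    MemLp (fun w : Fin m → ℝ => σ (∑ j, w j * x j)) 2 (gaussianVec m) := by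
  have h1 : MemLp (fun w : Fin m → ℝ => |σ 0| + lam * |∑ j, w j * x j|) 2 (gaussianVec m) :=
    oi_memLp_aff (oi_dot_memLp x) _ _
  refine h1.mono' ?_ (ae_of_all _ fun w => ?_)
  · exact (hc.comp (by fun_prop)).aestronglyMeasurable
  · exact oi_growth hl hL _

lemma oi_M1 (hl : 0 ≤ lam) (hL : ∀ x y, |σ x - σ y| ≤ lam * |x - y|) (hc : Continuous σ)
    (hmean : ∫ x, σ x ∂(gaussianReal 0 1) = 0) (x : Fin m → ℝ) :
    |∫ w, σ (∑ j, w j * x j) ∂(gaussianVec m)| ≤ lam * |∑ j, x j ^ 2 - 1| := by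
  rw [oi_integral_dot x σ hc.measurable]
  set r := Real.sqrt (∑ j, x j ^ 2) with hr
  have hr2 : r ^ 2 = ∑ j, x j ^ 2 := Real.sq_sqrt (Finset.sum_nonneg fun _ _ => sq_nonneg _)
  have hr0 : 0 ≤ r := Real.sqrt_nonneg _
  have hid : MemLp (fun s : ℝ => s) 2 (gaussianReal 0 1) := memLp_id_gaussianReal' 2 (by simp)
  have hs : ∀ r : ℝ, Integrable (fun s => σ (r * s)) (gaussianReal 0 1) := by
    intro r
    have h1 : Integrable (fun s : ℝ => |σ 0| + lam * |r * s|) (gaussianReal 0 1) :=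
      (integrable_const _).add ((((hid.integrable (by norm_num)).const_mul r).abs).const_mul lam)
    exact h1.mono' ((hc.comp (by fun_prop)).aestronglyMeasurable) (ae_of_all _ fun w => oi_growth hl hL _)
  have hs1 : Integrable σ (gaussianReal 0 1) := by simpa using hs 1
  have habs : ∫ s, |s| ∂(gaussianReal 0 1) ≤ 1 := by
    have : ∫ s, |s| ∂(gaussianReal 0 1) ≤ ∫ s, (1 + s ^ 2) / 2 ∂(gaussianReal 0 1) := by
      refine integral_mono (hid.integrable (by norm_num)).abs
        (((integrable_const _).add hid.integrable_sq).div_const _) fun w => ?_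
      have := sq_nonneg (|w| - 1)
      have h2 := sq_abs w
      simp only
      nlinarith
    refine this.trans (le_of_eq ?_)
    rw [integral_div, integral_add (integrable_const _) hid.integrable_sq, oi_gauss_sq]
    simp
  have e : ∫ s, σ (r * s) ∂(gaussianReal 0 1) = ∫ s, (σ (r * s) - σ s) ∂(gaussianReal 0 1) := by
    rw [integral_sub (hs r) hs1, hmean, sub_zero]
  rw [e]
  have h1 : |∫ s, (σ (r * s) - σ s) ∂(gaussianReal 0 1)| ≤ ∫ s, lam * |r - 1| * |s| ∂(gaussianReal 0 1) := by
    refine (abs_integral_le_integral_abs).trans (integral_mono ((hs r).sub hs1).abs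
      ((hid.integrable (by norm_num)).abs.const_mul _) fun s => ?_)
    refine (hL _ _).trans (le_of_eq ?_)
    rw [mul_assoc, ← abs_mul]; congr 2; ring
  rw [integral_const_mul] at h1
  have h2 : |r - 1| ≤ |∑ j, x j ^ 2 - 1| := by
    rw [← hr2, show r ^ 2 - 1 = (r - 1) * (r + 1) by ring, abs_mul, abs_of_nonneg (by linarith : 0 ≤ r + 1)]
    nlinarith [abs_nonneg (r - 1)]
  calc _ ≤ lam * |r - 1| * ∫ s, |s| ∂(gaussianReal 0 1) := h1
    _ ≤ lam * |r - 1| * 1 := by gcongr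
    _ ≤ _ := by rw [mul_one]; gcongr

lemma oi_M2 (hl : 0 ≤ lam) (hL : ∀ x y, |σ x - σ y| ≤ lam * |x - y|) (hc : Continuous σ)
    (hvar : ∫ x, σ x ^ 2 ∂(gaussianReal 0 1) = 1) (x : Fin m → ℝ) (hx : ∑ j, x j ^ 2 ≤ 2) :
    |∫ w, σ (∑ j, w j * x j) ^ 2 ∂(gaussianVec m) - 1| ≤ (lam * (2 * |σ 0| + 3 * lam)) * |∑ j, x j ^ 2 - 1| := by
  rw [oi_integral_dot x (fun s => σ s ^ 2) (hc.measurable.pow_const 2)]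
  set r := Real.sqrt (∑ j, x j ^ 2) with hr
  have hr2 : r ^ 2 = ∑ j, x j ^ 2 := Real.sq_sqrt (Finset.sum_nonneg fun _ _ => sq_nonneg _)
  have hr0 : 0 ≤ r := Real.sqrt_nonneg _
  have hr3 : r ≤ 2 := by nlinarith
  have hid : MemLp (fun s : ℝ => s) 2 (gaussianReal 0 1) := memLp_id_gaussianReal' 2 (by simp)
  have hs : ∀ r : ℝ, Integrable (fun s => σ (r * s) ^ 2) (gaussianReal 0 1) := by
    intro r
    have h1 : MemLp (fun s : ℝ => |σ 0| + lam * |r * s|) 2 (gaussianReal 0 1) :=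
      oi_memLp_aff (hid.const_mul r) _ _
    exact (h1.mono' ((hc.comp (by fun_prop)).aestronglyMeasurable) (ae_of_all _ fun w => oi_growth hl hL _)).integrable_sq
  have hs1 : Integrable (fun s => σ s ^ 2) (gaussianReal 0 1) := by simpa using hs 1
  have habs : ∫ s, |s| ∂(gaussianReal 0 1) ≤ 1 := by
    have : ∫ s, |s| ∂(gaussianReal 0 1) ≤ ∫ s, (1 + s ^ 2) / 2 ∂(gaussianReal 0 1) := by
      refine integral_mono (hid.integrable (by norm_num)).abs
        (((integrable_const _).add hid.integrable_sq).div_const _) fun w => ?_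
      have := sq_nonneg (|w| - 1)
      have h2 := sq_abs w
      simp only
      nlinarith
    refine this.trans (le_of_eq ?_)
    rw [integral_div, integral_add (integrable_const _) hid.integrable_sq, oi_gauss_sq]
    simp
  have e : ∫ s, σ (r * s) ^ 2 ∂(gaussianReal 0 1) - 1 = ∫ s, (σ (r * s) ^ 2 - σ s ^ 2) ∂(gaussianReal 0 1) := by
    rw [integral_sub (hs r) hs1, hvar]
  rw [e]
  have hA : Integrable (fun s : ℝ => 2 * |σ 0| * |s|) (gaussianReal 0 1) := (hid.integrable (by norm_num)).abs.const_mul _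
  have hB : Integrable (fun s : ℝ => 3 * lam * s ^ 2) (gaussianReal 0 1) := hid.integrable_sq.const_mul _
  have h1 : |∫ s, (σ (r * s) ^ 2 - σ s ^ 2) ∂(gaussianReal 0 1)| ≤
      ∫ s, lam * |r - 1| * (2 * |σ 0| * |s| + 3 * lam * s ^ 2) ∂(gaussianReal 0 1) := by
    refine (abs_integral_le_integral_abs).trans (integral_mono ((hs r).sub hs1).abs
      ((hA.add hB).const_mul _) fun s => ?_)
    have e1 : |σ (r * s) ^ 2 - σ s ^ 2| = |σ (r * s) - σ s| * |σ (r * s) + σ s| := by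
      rw [← abs_mul]; congr 1; ring
    have e2 : |σ (r * s) - σ s| ≤ lam * |r - 1| * |s| := by
      refine (hL _ _).trans (le_of_eq ?_)
      rw [mul_assoc, ← abs_mul]; congr 2; ring
    have e3 : |σ (r * s) + σ s| ≤ 2 * |σ 0| + 3 * lam * |s| := by
      have a1 := oi_growth hl hL (r * s)
      have a2 := oi_growth hl hL s
      rw [abs_mul, abs_of_nonneg hr0] at a1
      have a3 : r * |s| ≤ 2 * |s| := by gcongr
      have a4 := mul_le_mul_of_nonneg_left a3 hl
      have := abs_add_le (σ (r * s)) (σ s)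
      linarith
    simp only [e1]
    refine (mul_le_mul e2 e3 (abs_nonneg _) (by positivity)).trans (le_of_eq ?_)
    rw [← sq_abs s]; ring
  rw [integral_const_mul, integral_add hA hB, integral_const_mul, integral_const_mul, oi_gauss_sq] at h1
  have h2 : |r - 1| ≤ |∑ j, x j ^ 2 - 1| := by
    rw [← hr2, show r ^ 2 - 1 = (r - 1) * (r + 1) by ring, abs_mul, abs_of_nonneg (by linarith : 0 ≤ r + 1)]
    nlinarith [abs_nonneg (r - 1)]
  calc _ ≤ lam * |r - 1| * (2 * |σ 0| * (∫ s, |s| ∂(gaussianReal 0 1)) + 3 * lam * 1) := h1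
    _ ≤ lam * |r - 1| * (2 * |σ 0| * 1 + 3 * lam * 1) := by gcongr
    _ = (lam * (2 * |σ 0| + 3 * lam)) * |r - 1| := by ring
    _ ≤ _ := by gcongr

end

open MeasureTheory ProbabilityTheory Filter Topology Matrix

section
variable {m n : ℕ} {σ : ℝ → ℝ} {lam : ℝ}

lemma oi_M3 (hl : 0 ≤ lam) (hL : ∀ x y, |σ x - σ y| ≤ lam * |x - y|) (hc : Continuous σ)
    (hmean : ∫ x, σ x ∂(gaussianReal 0 1) = 0) (x y : Fin m → ℝ) (ε : ℝ) (hε : ε ≤ 1 / 2)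
    (hx : |∑ j, x j ^ 2 - 1| ≤ ε) (hy : |∑ j, y j ^ 2 - 1| ≤ ε) (hxy : |∑ j, x j * y j| ≤ ε) :
    |∫ w, σ (∑ j, w j * x j) * σ (∑ j, w j * y j) ∂(gaussianVec m)| ≤ (lam * (5 * |σ 0| + 6 * lam)) * ε := by
  have hε0 : 0 ≤ ε := (abs_nonneg _).trans hx
  have hx1 := abs_le.1 hx
  have hy1 := abs_le.1 hy
  set a := ∑ j, x j ^ 2 with ha
  set b := ∑ j, x j * y j with hb
  have ha2 : 1 / 2 ≤ a := by linarith [hx1.1]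
  have ha0 : 0 < a := by linarith
  set c := b / a with hcdef
  have hca : c * a = b := div_mul_cancel₀ _ ha0.ne'
  have hcabs : |c| ≤ 2 * ε := by
    rw [hcdef, abs_div, abs_of_pos ha0, div_le_iff₀ ha0]
    nlinarith
  set z : Fin m → ℝ := fun j => y j - c * x j with hz
  have hxz : ∑ j, x j * z j = 0 := by
    have : ∑ j, x j * z j = b - c * a := by
      rw [ha, hb, Finset.mul_sum, ← Finset.sum_sub_distrib]
      exact Finset.sum_congr rfl fun j _ => by simp only [hz]; ring
    rw [this, hca, sub_self]
  have hzz : ∑ j, z j ^ 2 ≤ 2 := by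
    have : ∑ j, z j ^ 2 = ∑ j, y j ^ 2 - 2 * c * b + c ^ 2 * a := by
      rw [ha, hb, Finset.mul_sum, Finset.mul_sum, ← Finset.sum_sub_distrib, ← Finset.sum_add_distrib]
      exact Finset.sum_congr rfl fun j _ => by simp only [hz]; ring
    rw [this, ← hca]
    nlinarith [sq_nonneg c, mul_nonneg (sq_nonneg c) ha0.le, hy1.2]
  have mx := oi_sig_memLp hl hL hc x
  have my := oi_sig_memLp hl hL hc y
  have mz := oi_sig_memLp hl hL hc z
  have i1 : Integrable (fun w : Fin m → ℝ => σ (∑ j, w j * x j) * σ (∑ j, w j * z j)) (gaussianVec m) :=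
    mx.integrable_mul mz
  have i2 : Integrable (fun w : Fin m → ℝ => σ (∑ j, w j * x j) * σ (∑ j, w j * y j)) (gaussianVec m) :=
    mx.integrable_mul my
  have e1 : ∫ w, σ (∑ j, w j * x j) * σ (∑ j, w j * z j) ∂(gaussianVec m) =
      (∫ w, σ (∑ j, w j * x j) ∂(gaussianVec m)) * ∫ w, σ (∑ j, w j * z j) ∂(gaussianVec m) := by
    have hi := (oi_dot_indep x z hxz).comp hc.measurable hc.measurable
    exact hi.integral_fun_mul_eq_mul_integral mx.aestronglyMeasurable mz.aestronglyMeasurable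
  have b1 := oi_M1 hl hL hc hmean x
  have b2 : |∫ w, σ (∑ j, w j * z j) ∂(gaussianVec m)| ≤ |σ 0| + lam * (3 / 2) := by
    have iz : Integrable (fun w : Fin m → ℝ => |∑ j, w j * z j|) (gaussianVec m) :=
      ((oi_dot_memLp z).integrable (by norm_num)).abs
    have h1 : |∫ w, σ (∑ j, w j * z j) ∂(gaussianVec m)| ≤ ∫ w, (|σ 0| + lam * |∑ j, w j * z j|) ∂(gaussianVec m) := by
      refine (abs_integral_le_integral_abs).trans (integral_mono (mz.integrable (by norm_num)).abs
        ((integrable_const _).add (iz.const_mul lam)) fun s => oi_growth hl hL _)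
    rw [integral_add (integrable_const _) (iz.const_mul lam), integral_const_mul] at h1
    have h2 := oi_dot_abs z
    have h3 : lam * ∫ w, |∑ j, w j * z j| ∂(gaussianVec m) ≤ lam * (3 / 2) := by
      apply mul_le_mul_of_nonneg_left _ hl; linarith
    simp only [integral_const, smul_eq_mul, probReal_univ, one_mul] at h1
    linarith
  have b3 : |∫ w, (σ (∑ j, w j * x j) * σ (∑ j, w j * y j) - σ (∑ j, w j * x j) * σ (∑ j, w j * z j)) ∂(gaussianVec m)|
      ≤ lam * |c| * (2 * |σ 0| + 2 * lam) := by
    have ix : Integrable (fun w : Fin m → ℝ => |σ 0| * |∑ j, w j * x j|) (gaussianVec m) :=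
      ((oi_dot_memLp x).integrable (by norm_num)).abs.const_mul _
    have ix2 : Integrable (fun w : Fin m → ℝ => lam * (∑ j, w j * x j) ^ 2) (gaussianVec m) :=
      (oi_dot_memLp x).integrable_sq.const_mul _
    have h1 : |∫ w, (σ (∑ j, w j * x j) * σ (∑ j, w j * y j) - σ (∑ j, w j * x j) * σ (∑ j, w j * z j)) ∂(gaussianVec m)|
        ≤ ∫ w, lam * |c| * (|σ 0| * |∑ j, w j * x j| + lam * (∑ j, w j * x j) ^ 2) ∂(gaussianVec m) := by
      refine (abs_integral_le_integral_abs).trans (integral_mono (i2.sub i1).abs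
        ((ix.add ix2).const_mul _) fun w => ?_)
      simp only
      rw [← mul_sub, abs_mul]
      have g1 := oi_growth hl hL (∑ j, w j * x j)
      have g2 := hL (∑ j, w j * y j) (∑ j, w j * z j)
      have g3 : ∑ j, w j * y j - ∑ j, w j * z j = c * ∑ j, w j * x j := by
        rw [Finset.mul_sum, ← Finset.sum_sub_distrib]
        exact Finset.sum_congr rfl fun j _ => by simp only [hz]; ring
      rw [g3, abs_mul] at g2
      refine (mul_le_mul g1 g2 (abs_nonneg _) (by positivity)).trans (le_of_eq ?_)
      rw [← sq_abs (∑ j, w j * x j)]; ring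
    rw [integral_const_mul, integral_add ix ix2, integral_const_mul, integral_const_mul, oi_dot_sq] at h1
    have h2 := oi_dot_abs x
    refine h1.trans ?_
    have h3 : ∫ w, |∑ j, w j * x j| ∂(gaussianVec m) ≤ 2 := by linarith
    have h4 : ∑ j, x j ^ 2 ≤ 2 := by linarith
    rw [mul_comm 2 |σ 0|, mul_comm 2 lam]
    gcongr
  rw [integral_sub i2 i1, e1] at b3
  have b4 : |(∫ w, σ (∑ j, w j * x j) ∂(gaussianVec m)) * ∫ w, σ (∑ j, w j * z j) ∂(gaussianVec m)| ≤
      (lam * ε) * (|σ 0| + lam * (3 / 2)) := by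
    rw [abs_mul]
    refine mul_le_mul (b1.trans ?_) b2 (abs_nonneg _) (by positivity)
    gcongr
  have b5 : lam * |c| * (2 * |σ 0| + 2 * lam) ≤ lam * (2 * ε) * (2 * |σ 0| + 2 * lam) := by gcongr
  have b6 := abs_sub_abs_le_abs_sub (∫ w, σ (∑ j, w j * x j) * σ (∑ j, w j * y j) ∂(gaussianVec m))
    ((∫ w, σ (∑ j, w j * x j) ∂(gaussianVec m)) * ∫ w, σ (∑ j, w j * z j) ∂(gaussianVec m))
  nlinarith [mul_nonneg (mul_nonneg hl hl) hε0]

lemma oi_E (hl : 0 ≤ lam) (hL : ∀ x y, |σ x - σ y| ≤ lam * |x - y|) (hc : Continuous σ) :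
    ∃ κ K : ℝ, 0 < κ ∧ 0 ≤ K ∧ ∀ (m : ℕ) (x : Fin m → ℝ), ∑ j, x j ^ 2 ≤ 2 →
      ∫⁻ w, ENNReal.ofReal (Real.exp (κ * σ (∑ j, w j * x j) ^ 2)) ∂(gaussianVec m) ≤ ENNReal.ofReal K := by
  set κ : ℝ := 1 / (16 * (lam ^ 2 + 1)) with hκ
  have hκ0 : 0 < κ := by positivity
  have hκ1 : κ * lam ^ 2 ≤ 1 / 16 := by
    rw [hκ, div_mul_eq_mul_div, div_le_div_iff₀ (by positivity) (by norm_num)]; nlinarith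
  refine ⟨κ, Real.exp (2 * κ * |σ 0| ^ 2) * ∫ s, Real.exp (s ^ 2 / 4) ∂(gaussianReal 0 1), hκ0,
    mul_nonneg (Real.exp_pos _).le (integral_nonneg fun s => (Real.exp_pos _).le), fun m x hx => ?_⟩
  rw [oi_lintegral_dot x (fun s => ENNReal.ofReal (Real.exp (κ * σ s ^ 2)))
    (by have := hc.measurable; fun_prop)]
  set r := Real.sqrt (∑ j, x j ^ 2) with hr
  have hr2 : r ^ 2 = ∑ j, x j ^ 2 := Real.sq_sqrt (Finset.sum_nonneg fun _ _ => sq_nonneg _)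
  rw [← integral_const_mul, ofReal_integral_eq_lintegral_ofReal (oi_exp_sq_integrable.const_mul _)
    (ae_of_all _ fun s => by positivity)]
  refine lintegral_mono fun s => ENNReal.ofReal_le_ofReal ?_
  rw [← Real.exp_add]
  apply Real.exp_le_exp.2
  have g := oi_growth hl hL (r * s)
  have g2 : σ (r * s) ^ 2 ≤ 2 * |σ 0| ^ 2 + 2 * lam ^ 2 * (r ^ 2 * s ^ 2) := by
    have h1 : |σ (r * s)| ^ 2 ≤ (|σ 0| + lam * |r * s|) ^ 2 := pow_le_pow_left₀ (abs_nonneg _) g 2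
    rw [sq_abs] at h1
    have h2 : |r * s| ^ 2 = r ^ 2 * s ^ 2 := by rw [sq_abs]; ring
    nlinarith [sq_nonneg (|σ 0| - lam * |r * s|)]
  have g3 : r ^ 2 * s ^ 2 ≤ 2 * s ^ 2 := by
    apply mul_le_mul_of_nonneg_right _ (sq_nonneg s); linarith
  have g4 : κ * lam ^ 2 * (r ^ 2 * s ^ 2) ≤ 1 / 16 * (2 * s ^ 2) := by
    apply mul_le_mul hκ1 g3 (by positivity) (by norm_num)
  nlinarith [mul_le_mul_of_nonneg_left g2 hκ0.le]

lemma oi_S (hl : 0 ≤ lam) (hL : ∀ x y, |σ x - σ y| ≤ lam * |x - y|) (hc : Continuous σ) :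
    ∃ κ K : ℝ, 0 < κ ∧ 0 ≤ K ∧ ∀ (m n : ℕ) (X : Matrix (Fin m) (Fin n) ℝ), (∀ α, ∑ j, X j α ^ 2 ≤ 2) →
      ∀ q : Fin n → ℝ, (∀ α, 0 ≤ q α) → ∑ α, q α ≤ 2 → ∀ s, 0 ≤ s → s ≤ κ →
      ∫⁻ w, ENNReal.ofReal (Real.exp (s * ∑ α, q α * σ (oiG X w α) ^ 2)) ∂(gaussianVec m) ≤
        ENNReal.ofReal (Real.exp (s * K)) := by
  obtain ⟨κ, K, hκ, hK, h⟩ := oi_E hl hL hc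
  refine ⟨κ / 2, 2 * K / κ, by positivity, by positivity, fun m n X hX q hq hq2 s hs hs2 => ?_⟩
  set w' : Fin n → ℝ := fun α => s * q α / κ with hw'
  have hw0 : ∀ α, 0 ≤ w' α := fun α => div_nonneg (mul_nonneg hs (hq α)) hκ.le
  have hws : ∑ α, w' α = s * (∑ α, q α) / κ := by
    rw [Finset.mul_sum, Finset.sum_div]
  have hw1 : ∑ α, w' α ≤ 1 := by
    rw [hws, div_le_one hκ]
    nlinarith
  have hw2 : ∑ α, w' α ≤ 2 * s / κ := by
    rw [hws]; apply div_le_div_of_nonneg_right _ hκ.le; nlinarith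
  calc ∫⁻ w, ENNReal.ofReal (Real.exp (s * ∑ α, q α * σ (oiG X w α) ^ 2)) ∂(gaussianVec m)
      ≤ ∫⁻ w, (ENNReal.ofReal (1 - ∑ α, w' α) + ∑ α, ENNReal.ofReal (w' α) * ENNReal.ofReal (Real.exp (κ * σ (oiG X w α) ^ 2))) ∂(gaussianVec m) := by
        refine lintegral_mono fun w => ?_
        have h1 := oi_jensen_fin w' (fun α => κ * σ (oiG X w α) ^ 2) hw0 hw1
        have e : ∑ α, w' α * (κ * σ (oiG X w α) ^ 2) = s * ∑ α, q α * σ (oiG X w α) ^ 2 := by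
          rw [Finset.mul_sum]
          refine Finset.sum_congr rfl fun α _ => ?_
          simp only [hw']; field_simp
        rw [e] at h1
        refine (ENNReal.ofReal_le_ofReal h1).trans ?_
        rw [ENNReal.ofReal_add (by linarith) (Finset.sum_nonneg fun α _ => mul_nonneg (hw0 α) (Real.exp_pos _).le),
          ENNReal.ofReal_sum_of_nonneg (fun α _ => mul_nonneg (hw0 α) (Real.exp_pos _).le)]
        simp_rw [ENNReal.ofReal_mul (hw0 _)]
        exact le_rfl
    _ = ENNReal.ofReal (1 - ∑ α, w' α) + ∑ α, ENNReal.ofReal (w' α) * ∫⁻ w, ENNReal.ofReal (Real.exp (κ * σ (oiG X w α) ^ 2)) ∂(gaussianVec m) := by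
        have hme : ∀ α, Measurable fun w : Fin m → ℝ => ENNReal.ofReal (Real.exp (κ * σ (oiG X w α) ^ 2)) := by
          intro α
          have h1 := hc.measurable
          have h2 : Measurable fun w : Fin m → ℝ => oiG X w α := by unfold oiG; fun_prop
          fun_prop
        rw [lintegral_add_left measurable_const, lintegral_finsetSum _ (fun α _ => (hme α).const_mul _)]
        simp only [lintegral_const, measure_univ, mul_one]
        congr 1
        exact Finset.sum_congr rfl fun α _ => lintegral_const_mul _ (hme α)
    _ ≤ ENNReal.ofReal (1 - ∑ α, w' α) + ∑ α, ENNReal.ofReal (w' α) * ENNReal.ofReal K := by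
        gcongr with α
        exact h m (fun j => X j α) (hX α)
    _ = ENNReal.ofReal ((1 - ∑ α, w' α) + (∑ α, w' α) * K) := by
        rw [ENNReal.ofReal_add (by linarith) (mul_nonneg (Finset.sum_nonneg fun α _ => hw0 α) hK),
          ENNReal.ofReal_mul (Finset.sum_nonneg fun α _ => hw0 α), ENNReal.ofReal_sum_of_nonneg (fun α _ => hw0 α),
          Finset.sum_mul]
    _ ≤ _ := by
        apply ENNReal.ofReal_le_ofReal
        have h1 := Real.add_one_le_exp (s * (2 * K / κ))
        have h2 := mul_le_mul_of_nonneg_right hw2 hK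
        have h3 : 2 * s / κ * K = s * (2 * K / κ) := by ring
        have h4 : 0 ≤ ∑ α, w' α := Finset.sum_nonneg fun α _ => hw0 α
        linarith

end

open MeasureTheory ProbabilityTheory Filter Topology Matrix

section
variable {σ σ' : ℝ → ℝ} {lam : ℝ}

lemma oi_lip (hl : 0 ≤ lam) (hd : ∀ x, HasDerivAt σ (σ' x) x) (hb : ∀ x, |σ' x| ≤ lam) (x y : ℝ) :
    |σ x - σ y| ≤ lam * |x - y| := by
  have := Convex.norm_image_sub_le_of_norm_hasDerivWithin_le (f := σ) (f' := σ') (s := Set.univ) (C := lam)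
    (fun x _ => (hd x).hasDerivWithinAt) (fun x _ => hb x) convex_univ (Set.mem_univ y) (Set.mem_univ x)
  simpa [Real.norm_eq_abs] using this

lemma oi_cont (hd : ∀ x, HasDerivAt σ (σ' x) x) : Continuous σ :=
  continuous_iff_continuousAt.2 fun x => (hd x).continuousAt

lemma oi_concA {m n : ℕ} (hl : 0 ≤ lam) (hd : ∀ x, HasDerivAt σ (σ' x) x) (hb : ∀ x, |σ' x| ≤ lam)
    (hc' : Continuous σ') (X : Matrix (Fin m) (Fin n) ℝ) (B : ℝ) (hX : opNorm X ≤ B)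
    (v : Fin n → ℝ) (hv : ∑ α, v α ^ 2 ≤ 1) (t : ℝ) :
    ∫⁻ w, ENNReal.ofReal (Real.exp (t * ((∑ α, v α * σ (oiG X w α)) - ∫ z, (∑ α, v α * σ (oiG X z α)) ∂(gaussianVec m)))) ∂(gaussianVec m)
      ≤ ENNReal.ofReal (Real.exp (t ^ 2 * (Real.pi ^ 2 / 8 * (B ^ 2 * lam ^ 2)))) := by
  have hc := oi_cont hd
  have h := oi_MPX X B hX (fun c => ∑ α, v α * σ (c α)) (fun c α => v α * σ' (c α)) (by fun_prop)
    (integrable_finsetSum _ fun α _ => ((oi_sig_memLp hl (oi_lip hl hd hb) hc (fun j => X j α)).integrable (by norm_num)).const_mul _)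
    (fun c c' θ hcc => by
      have : ∀ α ∈ (Finset.univ : Finset (Fin n)), HasDerivAt (fun θ => v α * σ (c θ α)) (v α * σ' (c θ α) * c' θ α) θ := by
        intro α _
        have := ((hd (c θ α)).comp θ (hcc α)).const_mul (v α)
        rw [mul_assoc]; exact this
      exact HasDerivAt.fun_sum this) t
  refine h.trans ?_
  have : ∀ w : Fin m → ℝ, ENNReal.ofReal (Real.exp (t ^ 2 * (Real.pi ^ 2 / 8) * (B ^ 2 * ∑ α, (v α * σ' (oiG X w α)) ^ 2))) ≤
      ENNReal.ofReal (Real.exp (t ^ 2 * (Real.pi ^ 2 / 8 * (B ^ 2 * lam ^ 2)))) := by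
    intro w
    apply ENNReal.ofReal_le_ofReal
    apply Real.exp_le_exp.2
    rw [mul_assoc]
    gcongr
    calc ∑ α, (v α * σ' (oiG X w α)) ^ 2 ≤ ∑ α, v α ^ 2 * lam ^ 2 := by
          gcongr with α
          rw [mul_pow]
          refine mul_le_mul_of_nonneg_left ?_ (sq_nonneg _)
          rw [← sq_abs]
          exact pow_le_pow_left₀ (abs_nonneg _) (hb _) 2
      _ ≤ _ := by rw [← Finset.sum_mul]; nlinarith [sq_nonneg lam]
  refine (lintegral_mono this).trans ?_
  simp

lemma oi_concQ (hl : 0 ≤ lam) (hd : ∀ x, HasDerivAt σ (σ' x) x) (hb : ∀ x, |σ' x| ≤ lam) (B : ℝ) :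
    ∃ t0 C : ℝ, 0 < t0 ∧ 0 ≤ C ∧ ∀ (m n : ℕ) (X : Matrix (Fin m) (Fin n) ℝ), opNorm X ≤ B → (∀ α, ∑ j, X j α ^ 2 ≤ 2) →
      ∀ (F : (Fin n → ℝ) → ℝ) (p : (Fin n → ℝ) → Fin n → ℝ), Continuous p →
      Integrable (fun w => F (oiG X w)) (gaussianVec m) →
      (∀ (c c' : ℝ → Fin n → ℝ) (θ : ℝ), (∀ α, HasDerivAt (fun θ => c θ α) (c' θ α) θ) →
        HasDerivAt (fun θ => F (c θ)) (∑ α, p (c θ) α * c' θ α) θ) →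
      ∀ q : Fin n → ℝ, (∀ α, 0 ≤ q α) → ∑ α, q α ≤ 2 →
      (∀ c, ∑ α, p c α ^ 2 ≤ 4 * lam ^ 2 * ∑ α, q α * σ (c α) ^ 2) →
      ∀ t, |t| ≤ t0 →
      ∫⁻ w, ENNReal.ofReal (Real.exp (t * (F (oiG X w) - ∫ z, F (oiG X z) ∂(gaussianVec m)))) ∂(gaussianVec m)
      ≤ ENNReal.ofReal (Real.exp (t ^ 2 * C)) := by
  obtain ⟨κ, K, hκ, hK, hS⟩ := oi_S hl (oi_lip hl hd hb) (oi_cont hd)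
  set A : ℝ := Real.pi ^ 2 / 8 * (B ^ 2 * (4 * lam ^ 2)) with hA
  have hA0 : 0 ≤ A := by positivity
  refine ⟨Real.sqrt (κ / (A + 1)), A * K, by positivity, by positivity, ?_⟩
  intro m n X hX hX2 F p hp hint hder q hq hq2 hpq t ht
  have ht2 : t ^ 2 * A ≤ κ := by
    have h1 : t ^ 2 ≤ κ / (A + 1) := by
      rw [← sq_abs, ← Real.sq_sqrt (by positivity : 0 ≤ κ / (A + 1))]
      exact pow_le_pow_left₀ (abs_nonneg _) ht 2
    rw [le_div_iff₀ (by positivity)] at h1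
    nlinarith [sq_nonneg t]
  refine (oi_MPX X B hX F p hp hint hder t).trans ?_
  refine (lintegral_mono (fun w => ?_)).trans ((hS m n X hX2 q hq hq2 (t ^ 2 * A) (by positivity) ht2).trans (by rw [mul_assoc]))
  apply ENNReal.ofReal_le_ofReal
  apply Real.exp_le_exp.2
  rw [hA]
  calc t ^ 2 * (Real.pi ^ 2 / 8) * (B ^ 2 * ∑ α, p (oiG X w) α ^ 2)
      ≤ t ^ 2 * (Real.pi ^ 2 / 8) * (B ^ 2 * (4 * lam ^ 2 * ∑ α, q α * σ (oiG X w α) ^ 2)) := by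
        gcongr; exact hpq _
    _ = _ := by ring

/-- quadratic-type statistics: both cases. -/
lemma oi_concBC (hl : 0 ≤ lam) (hd : ∀ x, HasDerivAt σ (σ' x) x) (hb : ∀ x, |σ' x| ≤ lam) (hc' : Continuous σ') (B : ℝ) :
    ∃ t0 C : ℝ, 0 < t0 ∧ 0 ≤ C ∧ ∀ (m n : ℕ) (X : Matrix (Fin m) (Fin n) ℝ), opNorm X ≤ B → (∀ α, ∑ j, X j α ^ 2 ≤ 2) →
      (∀ v : Fin n → ℝ, ∑ α, v α ^ 2 ≤ 1 → ∀ t, |t| ≤ t0 →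
      ∫⁻ w, ENNReal.ofReal (Real.exp (t * ((∑ α, v α * σ (oiG X w α) ^ 2) - ∫ z, (∑ α, v α * σ (oiG X z α) ^ 2) ∂(gaussianVec m)))) ∂(gaussianVec m)
      ≤ ENNReal.ofReal (Real.exp (t ^ 2 * C))) ∧
      (∀ α β : Fin n, ∀ t, |t| ≤ t0 →
      ∫⁻ w, ENNReal.ofReal (Real.exp (t * ((σ (oiG X w α) * σ (oiG X w β)) - ∫ z, (σ (oiG X z α) * σ (oiG X z β)) ∂(gaussianVec m)))) ∂(gaussianVec m)
      ≤ ENNReal.ofReal (Real.exp (t ^ 2 * C))) := by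
  obtain ⟨t0, C, ht0, hC, h⟩ := oi_concQ hl hd hb B
  have hc := oi_cont hd
  have hbs : ∀ x, σ' x ^ 2 ≤ lam ^ 2 := fun x => by
    rw [← sq_abs]; exact pow_le_pow_left₀ (abs_nonneg _) (hb _) 2
  refine ⟨t0, C, ht0, hC, fun m n X hX hX2 => ⟨fun v hv t ht => ?_, fun α β t ht => ?_⟩⟩
  · refine h m n X hX hX2 (fun c => ∑ α, v α * σ (c α) ^ 2) (fun c α => 2 * v α * σ (c α) * σ' (c α)) (by fun_prop)
      (integrable_finsetSum _ fun α _ => ((oi_sig_memLp hl (oi_lip hl hd hb) hc (fun j => X j α)).integrable_sq).const_mul _)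
      (fun c c' θ hcc => ?_) (fun α => v α ^ 2) (fun α => sq_nonneg _) (by linarith) (fun c => ?_) t ht
    · have : ∀ α ∈ (Finset.univ : Finset (Fin n)), HasDerivAt (fun θ => v α * σ (c θ α) ^ 2) (2 * v α * σ (c θ α) * σ' (c θ α) * c' θ α) θ := by
        intro α _
        have h0 : HasDerivAt (fun θ => σ (c θ α)) (σ' (c θ α) * c' θ α) θ := (hd (c θ α)).comp θ (hcc α)
        have := (h0.pow 2).const_mul (v α)
        refine this.congr_deriv ?_
        simp; ring
      exact HasDerivAt.fun_sum this
    · rw [Finset.mul_sum]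
      refine Finset.sum_le_sum fun α _ => ?_
      have h1 := mul_le_mul_of_nonneg_left (hbs (c α)) (by positivity : 0 ≤ 4 * v α ^ 2 * σ (c α) ^ 2)
      nlinarith
  · refine h m n X hX hX2 (fun c => σ (c α) * σ (c β))
      (fun c γ => (Pi.single α (σ' (c α) * σ (c β)) : Fin n → ℝ) γ + (Pi.single β (σ (c α) * σ' (c β)) : Fin n → ℝ) γ) ?_
      ((oi_sig_memLp hl (oi_lip hl hd hb) hc (fun j => X j α)).integrable_mul (oi_sig_memLp hl (oi_lip hl hd hb) hc (fun j => X j β)))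
      (fun c c' θ hcc => ?_) (fun γ => (Pi.single α 1 : Fin n → ℝ) γ + (Pi.single β 1 : Fin n → ℝ) γ) (fun γ => ?_) ?_ (fun c => ?_) t ht
    · refine continuous_pi fun γ => ?_
      simp only [Pi.single_apply]
      refine Continuous.add ?_ ?_
      · split_ifs <;> fun_prop
      · split_ifs <;> fun_prop
    · have ha : HasDerivAt (fun θ => σ (c θ α)) (σ' (c θ α) * c' θ α) θ := (hd (c θ α)).comp θ (hcc α)
      have hb : HasDerivAt (fun θ => σ (c θ β)) (σ' (c θ β) * c' θ β) θ := (hd (c θ β)).comp θ (hcc β)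
      refine (ha.mul hb).congr_deriv ?_
      simp only [Pi.single_apply, add_mul, Finset.sum_add_distrib, ite_mul, zero_mul, Finset.sum_ite_eq', Finset.mem_univ, if_true]
      ring
    · simp only [Pi.single_apply]; split_ifs <;> norm_num
    · simp only [Pi.single_apply, Finset.sum_add_distrib]; simp; norm_num
    · have e1 : ∑ γ, ((Pi.single α 1 : Fin n → ℝ) γ + (Pi.single β 1 : Fin n → ℝ) γ) * σ (c γ) ^ 2 = σ (c α) ^ 2 + σ (c β) ^ 2 := by
        simp [Pi.single_apply, add_mul, Finset.sum_add_distrib]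
      have e2 : ∑ γ, (2 * (Pi.single α ((σ' (c α) * σ (c β)) ^ 2) : Fin n → ℝ) γ + 2 * (Pi.single β ((σ (c α) * σ' (c β)) ^ 2) : Fin n → ℝ) γ)
          = 2 * (σ' (c α) * σ (c β)) ^ 2 + 2 * (σ (c α) * σ' (c β)) ^ 2 := by
        simp [Pi.single_apply, Finset.sum_add_distrib]
      rw [e1]
      calc _ ≤ ∑ γ, (2 * (Pi.single α ((σ' (c α) * σ (c β)) ^ 2) : Fin n → ℝ) γ + 2 * (Pi.single β ((σ (c α) * σ' (c β)) ^ 2) : Fin n → ℝ) γ) := by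
            refine Finset.sum_le_sum fun γ _ => ?_
            have s1 : (Pi.single α ((σ' (c α) * σ (c β)) ^ 2) : Fin n → ℝ) γ = ((Pi.single α (σ' (c α) * σ (c β)) : Fin n → ℝ) γ) ^ 2 := by
              simp only [Pi.single_apply]; split_ifs <;> simp
            have s2 : (Pi.single β ((σ (c α) * σ' (c β)) ^ 2) : Fin n → ℝ) γ = ((Pi.single β (σ (c α) * σ' (c β)) : Fin n → ℝ) γ) ^ 2 := by
              simp only [Pi.single_apply]; split_ifs <;> simp
            rw [s1, s2]
            nlinarith [sq_nonneg ((Pi.single α (σ' (c α) * σ (c β)) : Fin n → ℝ) γ - (Pi.single β (σ (c α) * σ' (c β)) : Fin n → ℝ) γ)]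
        _ ≤ _ := by
            rw [e2, mul_pow, mul_pow]
            have h1 := mul_le_mul_of_nonneg_right (hbs (c α)) (sq_nonneg (σ (c β)))
            have h2 := mul_le_mul_of_nonneg_right (hbs (c β)) (sq_nonneg (σ (c α)))
            have h3 := mul_nonneg (sq_nonneg lam) (sq_nonneg (σ (c β)))
            have h4 := mul_nonneg (sq_nonneg lam) (sq_nonneg (σ (c α)))
            nlinarith

end

/-- averaged statistics -/
lemma oi_avg {d m : ℕ} (hd : 0 < d) (f : (Fin m → ℝ) → ℝ) (hf : Measurable f) (E t C τ : ℝ)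
    (h : ∫⁻ w, ENNReal.ofReal (Real.exp (t * (f w - E))) ∂(gaussianVec m) ≤ ENNReal.ofReal (Real.exp (t ^ 2 * C))) :
    gaussianMat d m {W | t * τ ≤ t * ((∑ i, f (W i)) / d - E)} ≤ ENNReal.ofReal (Real.exp (d * (t ^ 2 * C - t * τ))) := by
  have h1 := oi_chernoff (d := d) (fun _ w => t * (f w - E)) (fun _ => by fun_prop) (fun _ => t ^ 2 * C) (d * (t * τ)) (fun _ => h)
  simp only [Finset.sum_const, Finset.card_univ, Fintype.card_fin, nsmul_eq_mul] at h1
  rw [mul_sub]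
  refine (measure_mono ?_).trans h1
  intro W hW
  simp only [Set.mem_ofPred_eq] at hW ⊢
  have hd' : (0 : ℝ) < d := by exact_mod_cast hd
  have h2 := mul_le_mul_of_nonneg_left hW hd'.le
  refine h2.trans (le_of_eq ?_)
  rw [← Finset.mul_sum, Finset.sum_sub_distrib]
  simp only [Finset.sum_const, Finset.card_univ, Fintype.card_fin, nsmul_eq_mul]
  field_simp

lemma oi_lin {d m : ℕ} (hd : 0 < d) (f : (Fin m → ℝ) → ℝ) (hf : Measurable f) (E C τ : ℝ) (hC : 0 ≤ C)
    (h : ∀ t, ∫⁻ w, ENNReal.ofReal (Real.exp (t * (f w - E))) ∂(gaussianVec m) ≤ ENNReal.ofReal (Real.exp (t ^ 2 * C)))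
    (u : Fin d → ℝ) (hu : ∑ i, u i ^ 2 ≤ 1) :
    gaussianMat d m {W | τ + |E| ≤ ∑ i, u i * ((Real.sqrt d)⁻¹ * f (W i))} ≤ ENNReal.ofReal (Real.exp (d * (C - τ))) := by
  have hd' : (0 : ℝ) < d := by exact_mod_cast hd
  have hs : (0 : ℝ) < Real.sqrt d := Real.sqrt_pos.2 hd'
  have hss : Real.sqrt d * Real.sqrt d = d := Real.mul_self_sqrt hd'.le
  have h1 := oi_chernoff (d := d) (fun i w => (Real.sqrt d * u i) * (f w - E)) (fun _ => by fun_prop)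
    (fun i => (Real.sqrt d * u i) ^ 2 * C) (d * τ) (fun i => h _)
  refine (measure_mono ?_).trans (h1.trans (ENNReal.ofReal_le_ofReal (Real.exp_le_exp.2 ?_)))
  · intro W hW
    simp only [Set.mem_ofPred_eq] at hW ⊢
    have hsum : |∑ i, u i| ≤ Real.sqrt d := by
      apply Real.abs_le_sqrt
      have := sq_sum_le_card_mul_sum_sq (s := Finset.univ) (f := u)
      simp only [Finset.card_univ, Fintype.card_fin] at this
      nlinarith
    have e1 : ∑ i, Real.sqrt d * u i * (f (W i) - E) =
        d * (∑ i, u i * ((Real.sqrt d)⁻¹ * f (W i))) - Real.sqrt d * (∑ i, u i) * E := by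
      rw [Finset.mul_sum, Finset.mul_sum, Finset.sum_mul, ← Finset.sum_sub_distrib]
      refine Finset.sum_congr rfl fun i _ => ?_
      have e0 : (d : ℝ) * (u i * ((Real.sqrt d)⁻¹ * f (W i))) = Real.sqrt d * u i * f (W i) := by
        have : (d : ℝ) * (Real.sqrt d)⁻¹ = Real.sqrt d := by
          rw [← div_eq_mul_inv, Real.div_sqrt]
        calc _ = ((d : ℝ) * (Real.sqrt d)⁻¹) * u i * f (W i) := by ring
          _ = _ := by rw [this]
      rw [e0]; ring
    rw [e1]
    have e2 : Real.sqrt d * (∑ i, u i) * E ≤ d * |E| := by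
      refine (le_abs_self _).trans ?_
      rw [abs_mul, abs_mul, abs_of_pos hs]
      refine mul_le_mul_of_nonneg_right ?_ (abs_nonneg _)
      calc _ ≤ Real.sqrt d * Real.sqrt d := by gcongr
        _ = _ := hss
    nlinarith
  · have : ∑ i, (Real.sqrt d * u i) ^ 2 * C = d * C * ∑ i, u i ^ 2 := by
      rw [Finset.mul_sum]
      refine Finset.sum_congr rfl fun i _ => ?_
      rw [mul_pow, sq (Real.sqrt d), hss]; ring
    rw [this]
    nlinarith [mul_nonneg hd'.le hC]

open MeasureTheory ProbabilityTheory Filter Topology Matrix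

/-- next layer -/
noncomputable def oiY {d m n : ℕ} (σ : ℝ → ℝ) (X : Matrix (Fin m) (Fin n) ℝ) (W : Fin d → Fin m → ℝ) : Matrix (Fin d) (Fin n) ℝ :=
  (Real.sqrt d)⁻¹ • ((Matrix.of W * X).map σ)

lemma oiY_apply {d m n : ℕ} (σ : ℝ → ℝ) (X : Matrix (Fin m) (Fin n) ℝ) (W : Fin d → Fin m → ℝ) (i : Fin d) (α : Fin n) :
    oiY σ X W i α = (Real.sqrt d)⁻¹ * σ (oiG X (W i) α) := by
  simp [oiY, oiG, Matrix.mul_apply]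

lemma oiY_inner {d m n : ℕ} (σ : ℝ → ℝ) (X : Matrix (Fin m) (Fin n) ℝ) (W : Fin d → Fin m → ℝ) (α β : Fin n) :
    ∑ i, oiY σ X W i α * oiY σ X W i β = (∑ i, σ (oiG X (W i) α) * σ (oiG X (W i) β)) / d := by
  rw [Finset.sum_div]
  refine Finset.sum_congr rfl fun i _ => ?_
  rw [oiY_apply, oiY_apply]
  have : (Real.sqrt d)⁻¹ * (Real.sqrt d)⁻¹ = (d : ℝ)⁻¹ := by
    rw [← mul_inv, Real.mul_self_sqrt (Nat.cast_nonneg d)]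
  rw [div_eq_mul_inv, ← this]; ring

lemma oi_five (n : ℕ) : ((5 : ℝ) ^ n) ≤ Real.exp (2 * n) := by
  have h : (5 : ℝ) ≤ Real.exp 2 := by
    have h1 := Real.exp_one_gt_d9
    have : Real.exp 2 = Real.exp 1 * Real.exp 1 := by rw [← Real.exp_add]; norm_num
    rw [this]; nlinarith
  rw [mul_comm, Real.exp_nat_mul]
  exact pow_le_pow_left₀ (by norm_num) h n

lemma oi_norm_le_one {n : ℕ} (v : EuclideanSpace ℝ (Fin n)) (h : ‖v‖ ≤ 1) : ∑ α, v α ^ 2 ≤ 1 := by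
  rw [← EuclideanSpace.real_norm_sq_eq]
  nlinarith [norm_nonneg v]

section
variable {σ σ' : ℝ → ℝ} {lam : ℝ}

lemma oi_op (hl : 0 ≤ lam) (hd : ∀ x, HasDerivAt σ (σ' x) x) (hb : ∀ x, |σ' x| ≤ lam) (hc' : Continuous σ')
    (hmean : ∫ x, σ x ∂(gaussianReal 0 1) = 0) (Γ B : ℝ) (hΓ : 0 ≤ Γ) (hB : 0 ≤ B) :
    ∃ B1 : ℝ, ∀ (n d m : ℕ), 0 < d → (n : ℝ) ≤ Γ * d → ∀ (ε : ℝ) (X : Matrix (Fin m) (Fin n) ℝ), IsOrthonormal ε B X →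
      gaussianMat d m {W | ¬ opNorm (oiY σ X W) ≤ B1} ≤ ENNReal.ofReal (Real.exp (-d)) := by
  set C : ℝ := Real.pi ^ 2 / 8 * (B ^ 2 * lam ^ 2) with hC
  have hC0 : 0 ≤ C := by positivity
  set τ : ℝ := 2 * Γ + 3 + C with hτ
  have hL := oi_lip hl hd hb
  have hc := oi_cont hd
  refine ⟨4 * (τ + lam * B), fun n d m hd0 hn ε X hX => ?_⟩
  obtain ⟨N, hNc, hN1, hN⟩ := oi_net n
  obtain ⟨M, hMc, hM1, hM⟩ := oi_net d
  let f : EuclideanSpace ℝ (Fin n) → (Fin m → ℝ) → ℝ := fun v w => ∑ α, v α * σ (oiG X w α)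
  have hfm : ∀ v, Measurable (f v) := by
    intro v
    have h1 := hc.measurable
    simp only [f, oiG]
    fun_prop
  have hE : ∀ v ∈ N, |∫ w, f v w ∂(gaussianVec m)| ≤ lam * B := by
    intro v hv
    have h1 : ∫ w, f v w ∂(gaussianVec m) = ∑ α, v α * ∫ w, σ (oiG X w α) ∂(gaussianVec m) := by
      simp only [f, oiG]
      rw [integral_finsetSum _ fun α _ => ((oi_sig_memLp hl hL hc (fun j => X j α)).integrable (by norm_num)).const_mul _]
      exact Finset.sum_congr rfl fun α _ => integral_const_mul _ _
    rw [h1]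
    apply abs_le_of_sq_le_sq _ (by positivity)
    refine (Finset.sum_mul_sq_le_sq_mul_sq _ _ _).trans ?_
    have h2 := oi_norm_le_one v (hN1 v hv)
    have h3 : ∑ α, (∫ w, σ (oiG X w α) ∂(gaussianVec m)) ^ 2 ≤ lam ^ 2 * B ^ 2 := by
      calc _ ≤ ∑ α, lam ^ 2 * ((∑ j, X j α ^ 2) - 1) ^ 2 := by
            refine Finset.sum_le_sum fun α _ => ?_
            have := oi_M1 hl hL hc hmean (fun j => X j α)
            rw [← sq_abs, ← sq_abs (_ - 1), ← mul_pow]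
            exact pow_le_pow_left₀ (abs_nonneg _) this 2
        _ ≤ _ := by
            rw [← Finset.mul_sum]
            gcongr
            exact hX.2.2.2
    rw [mul_pow]
    calc _ ≤ 1 * (lam ^ 2 * B ^ 2) := mul_le_mul h2 h3 (Finset.sum_nonneg fun _ _ => sq_nonneg _) (by norm_num)
      _ = _ := one_mul _
  have hsub : {W : Fin d → Fin m → ℝ | ¬ opNorm (oiY σ X W) ≤ 4 * (τ + lam * B)} ⊆
      ⋃ v ∈ N, ⋃ u ∈ M, {W : Fin d → Fin m → ℝ | τ + |∫ w, f v w ∂(gaussianVec m)| ≤ ∑ i, u i * ((Real.sqrt d)⁻¹ * f v (W i))} := by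
    intro W hW
    by_contra hcon
    simp only [Set.mem_iUnion, Set.mem_ofPred_eq, not_exists, not_le] at hcon
    refine hW (oi_net_op N hN M hM _ _ (by positivity) fun v hv u hu => ?_)
    have h1 := hcon v hv u hu
    have h2 := hE v hv
    have h3 : ∑ i, u i * ∑ α, oiY σ X W i α * v α = ∑ i, u i * ((Real.sqrt d)⁻¹ * f v (W i)) := by
      refine Finset.sum_congr rfl fun i _ => ?_
      congr 1
      simp only [f, Finset.mul_sum]
      exact Finset.sum_congr rfl fun α _ => by rw [oiY_apply]; ring
    rw [h3]; linarith
  have hd' : (0 : ℝ) < d := by exact_mod_cast hd0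
  calc _ ≤ _ := measure_mono hsub
    _ ≤ ∑ v ∈ N, gaussianMat d m (⋃ u ∈ M, {W : Fin d → Fin m → ℝ | τ + |∫ w, f v w ∂(gaussianVec m)| ≤ ∑ i, u i * ((Real.sqrt d)⁻¹ * f v (W i))}) :=
        measure_biUnion_finset_le _ _
    _ ≤ ∑ v ∈ N, ∑ u ∈ M, gaussianMat d m {W : Fin d → Fin m → ℝ | τ + |∫ w, f v w ∂(gaussianVec m)| ≤ ∑ i, u i * ((Real.sqrt d)⁻¹ * f v (W i))} :=
        Finset.sum_le_sum fun v _ => measure_biUnion_finset_le _ _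
    _ ≤ ∑ v ∈ N, ∑ u ∈ M, ENNReal.ofReal (Real.exp (d * (C - τ))) := by
        refine Finset.sum_le_sum fun v hv => Finset.sum_le_sum fun u hu => ?_
        exact oi_lin hd0 (f v) (hfm v) _ C τ hC0 (fun t => oi_concA hl hd hb hc' X B hX.2.2.1 v (oi_norm_le_one v (hN1 v hv)) t)
          u (oi_norm_le_one u (hM1 u hu))
    _ = ENNReal.ofReal (N.card * (M.card * Real.exp (d * (C - τ)))) := by
        rw [ENNReal.ofReal_mul (by positivity), ENNReal.ofReal_mul (by positivity)]
        simp
    _ ≤ ENNReal.ofReal (Real.exp (2 * n) * (Real.exp (2 * d) * Real.exp (d * (C - τ)))) := by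
        have h1 : (N.card : ℝ) ≤ Real.exp (2 * n) := le_trans (by exact_mod_cast hNc) (oi_five n)
        have h2 : (M.card : ℝ) ≤ Real.exp (2 * d) := le_trans (by exact_mod_cast hMc) (oi_five d)
        gcongr
    _ ≤ _ := by
        rw [← Real.exp_add, ← Real.exp_add]
        apply ENNReal.ofReal_le_ofReal
        apply Real.exp_le_exp.2
        rw [hτ]
        nlinarith

lemma oi_sq {t0 C : ℝ} (ht0 : 0 < t0) (hC : 0 ≤ C) (hl : 0 ≤ lam) (hd : ∀ x, HasDerivAt σ (σ' x) x) (hb : ∀ x, |σ' x| ≤ lam)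
    (Γ : ℝ) (hΓ : 0 ≤ Γ) (n d m : ℕ) (hd0 : 0 < d) (hn : (n : ℝ) ≤ Γ * d) (X : Matrix (Fin m) (Fin n) ℝ)
    (h : ∀ v : Fin n → ℝ, ∑ α, v α ^ 2 ≤ 1 → ∀ t, |t| ≤ t0 →
      ∫⁻ w, ENNReal.ofReal (Real.exp (t * ((∑ α, v α * σ (oiG X w α) ^ 2) - ∫ z, (∑ α, v α * σ (oiG X z α) ^ 2) ∂(gaussianVec m)))) ∂(gaussianVec m)
      ≤ ENNReal.ofReal (Real.exp (t ^ 2 * C))) :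
    gaussianMat d m {W | ¬ ∑ α, ((∑ i, oiY σ X W i α ^ 2) - ∫ w, σ (oiG X w α) ^ 2 ∂(gaussianVec m)) ^ 2 ≤ (2 * ((t0 ^ 2 * C + 2 * Γ + 1) / t0)) ^ 2}
      ≤ ENNReal.ofReal (Real.exp (-d)) := by
  set τ := (t0 ^ 2 * C + 2 * Γ + 1) / t0 with hτ
  have hτt : t0 * τ = t0 ^ 2 * C + 2 * Γ + 1 := by rw [hτ]; field_simp
  have hL := oi_lip hl hd hb
  have hc := oi_cont hd
  obtain ⟨N, hNc, hN1, hN⟩ := oi_net n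
  let f : EuclideanSpace ℝ (Fin n) → (Fin m → ℝ) → ℝ := fun v w => ∑ α, v α * σ (oiG X w α) ^ 2
  have hfm : ∀ v, Measurable (f v) := by
    intro v
    have h1 := hc.measurable
    simp only [f, oiG]
    fun_prop
  have hE : ∀ v, ∫ w, f v w ∂(gaussianVec m) = ∑ α, v α * ∫ w, σ (oiG X w α) ^ 2 ∂(gaussianVec m) := by
    intro v
    simp only [f, oiG]
    rw [integral_finsetSum _ fun α _ => ((oi_sig_memLp hl hL hc (fun j => X j α)).integrable_sq).const_mul _]
    exact Finset.sum_congr rfl fun α _ => integral_const_mul _ _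
  have hsub : {W : Fin d → Fin m → ℝ | ¬ ∑ α, ((∑ i, oiY σ X W i α ^ 2) - ∫ w, σ (oiG X w α) ^ 2 ∂(gaussianVec m)) ^ 2 ≤ (2 * τ) ^ 2} ⊆
      ⋃ v ∈ N, {W : Fin d → Fin m → ℝ | t0 * τ ≤ t0 * ((∑ i, f v (W i)) / d - ∫ w, f v w ∂(gaussianVec m))} := by
    intro W hW
    by_contra hcon
    simp only [Set.mem_iUnion, Set.mem_ofPred_eq, not_exists, not_le] at hcon
    let z : EuclideanSpace ℝ (Fin n) := WithLp.toLp 2 fun α => (∑ i, oiY σ X W i α ^ 2) - ∫ w, σ (oiG X w α) ^ 2 ∂(gaussianVec m)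
    have hz : ‖z‖ ≤ 2 * τ := by
      refine oi_net_vec N hN z τ fun v hv => ?_
      have h1 := lt_of_mul_lt_mul_left (hcon v hv) ht0.le
      have h3 : ∑ i, v i * z i = (∑ i, f v (W i)) / d - ∫ w, f v w ∂(gaussianVec m) := by
        rw [hE]
        simp only [z, f, mul_sub, Finset.sum_sub_distrib]
        congr 1
        rw [Finset.sum_comm, Finset.sum_div]
        refine Finset.sum_congr rfl fun α _ => ?_
        have := oiY_inner σ X W α α
        simp only [← sq] at this
        rw [this, ← Finset.mul_sum]; ring
      rw [h3]; exact h1.le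
    refine hW ?_
    have h4 : ‖z‖ ^ 2 = ∑ α, ((∑ i, oiY σ X W i α ^ 2) - ∫ w, σ (oiG X w α) ^ 2 ∂(gaussianVec m)) ^ 2 :=
      EuclideanSpace.real_norm_sq_eq z
    rw [← h4]
    exact pow_le_pow_left₀ (norm_nonneg _) hz 2
  have hd' : (0 : ℝ) < d := by exact_mod_cast hd0
  calc _ ≤ _ := measure_mono hsub
    _ ≤ ∑ v ∈ N, gaussianMat d m {W : Fin d → Fin m → ℝ | t0 * τ ≤ t0 * ((∑ i, f v (W i)) / d - ∫ w, f v w ∂(gaussianVec m))} :=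
        measure_biUnion_finset_le _ _
    _ ≤ ∑ v ∈ N, ENNReal.ofReal (Real.exp (d * (t0 ^ 2 * C - t0 * τ))) := by
        refine Finset.sum_le_sum fun v hv => ?_
        exact oi_avg hd0 (f v) (hfm v) _ t0 C τ (h v (oi_norm_le_one v (hN1 v hv)) t0 (abs_of_pos ht0).le)
    _ = ENNReal.ofReal (N.card * Real.exp (d * (t0 ^ 2 * C - t0 * τ))) := by
        rw [ENNReal.ofReal_mul (by positivity)]
        simp
    _ ≤ ENNReal.ofReal (Real.exp (2 * n) * Real.exp (d * (t0 ^ 2 * C - t0 * τ))) := by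
        have h1 : (N.card : ℝ) ≤ Real.exp (2 * n) := le_trans (by exact_mod_cast hNc) (oi_five n)
        gcongr
    _ ≤ _ := by
        rw [← Real.exp_add, hτt]
        apply ENNReal.ofReal_le_ofReal
        apply Real.exp_le_exp.2
        nlinarith

lemma oi_pair {t0 C : ℝ} (hC : 0 ≤ C) (hd : ∀ x, HasDerivAt σ (σ' x) x)
    (n d m : ℕ) (hd0 : 0 < d) (X : Matrix (Fin m) (Fin n) ℝ) (α β : Fin n)
    (h : ∀ t, |t| ≤ t0 →
      ∫⁻ w, ENNReal.ofReal (Real.exp (t * ((σ (oiG X w α) * σ (oiG X w β)) - ∫ z, (σ (oiG X z α) * σ (oiG X z β)) ∂(gaussianVec m)))) ∂(gaussianVec m)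
      ≤ ENNReal.ofReal (Real.exp (t ^ 2 * C))) (δ : ℝ) (hδ : 0 ≤ δ) (hδ2 : δ / (2 * (C + 1)) ≤ t0) :
    gaussianMat d m {W | ¬ |∑ i, oiY σ X W i α * oiY σ X W i β - ∫ z, (σ (oiG X z α) * σ (oiG X z β)) ∂(gaussianVec m)| ≤ δ}
      ≤ ENNReal.ofReal (2 * Real.exp (- (d * δ ^ 2) / (4 * (C + 1)))) := by
  set t := δ / (2 * (C + 1)) with ht
  have ht0 : 0 ≤ t := by positivity
  have hc := oi_cont hd
  have hfm : Measurable fun w : Fin m → ℝ => σ (oiG X w α) * σ (oiG X w β) := by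
    have h1 := hc.measurable
    simp only [oiG]
    fun_prop
  set E := ∫ z, (σ (oiG X z α) * σ (oiG X z β)) ∂(gaussianVec m) with hE
  have h1 := oi_avg hd0 _ hfm E t C δ (h t (by rw [abs_of_nonneg ht0]; exact hδ2))
  have h2 := oi_avg hd0 _ hfm E (-t) C (-δ) (h (-t) (by rw [abs_neg, abs_of_nonneg ht0]; exact hδ2))
  have hex : d * (t ^ 2 * C - t * δ) ≤ - (d * δ ^ 2) / (4 * (C + 1)) := by
    have e1 : - ((d : ℝ) * δ ^ 2) / (4 * (C + 1)) = d * (t ^ 2 * (C + 1) - t * δ) := by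
      rw [ht]; field_simp; ring
    rw [e1]
    gcongr
    linarith
  rw [show (-t) ^ 2 * C - -t * -δ = t ^ 2 * C - t * δ by ring] at h2
  have hsub : {W : Fin d → Fin m → ℝ | ¬ |∑ i, oiY σ X W i α * oiY σ X W i β - E| ≤ δ} ⊆
      {W | t * δ ≤ t * ((∑ i, σ (oiG X (W i) α) * σ (oiG X (W i) β)) / d - E)} ∪
      {W | -t * -δ ≤ -t * ((∑ i, σ (oiG X (W i) α) * σ (oiG X (W i) β)) / d - E)} := by
    intro W hW
    simp only [Set.mem_ofPred_eq, not_le, oiY_inner] at hW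
    rcases lt_abs.1 hW with h3 | h3
    · left
      exact mul_le_mul_of_nonneg_left h3.le ht0
    · right
      have := mul_le_mul_of_nonneg_left h3.le ht0
      simp only [Set.mem_ofPred_eq]
      linarith
  calc _ ≤ _ := measure_mono hsub
    _ ≤ _ := measure_union_le _ _
    _ ≤ ENNReal.ofReal (Real.exp (d * (t ^ 2 * C - t * δ))) + ENNReal.ofReal (Real.exp (d * (t ^ 2 * C - t * δ))) := add_le_add h1 h2
    _ = ENNReal.ofReal (2 * Real.exp (d * (t ^ 2 * C - t * δ))) := by
        rw [← ENNReal.ofReal_add (Real.exp_pos _).le (Real.exp_pos _).le]; congr 1; ring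
    _ ≤ _ := by gcongr

end

open MeasureTheory ProbabilityTheory Filter Topology Matrix

lemma oi_tail (c : ℝ) (hc : 0 < c) : ∃ K : ℝ, 0 ≤ K ∧ ∀ n : ℕ, 1 ≤ n →
    (n : ℝ) ^ 2 * (2 * Real.exp (-(c * (n : ℝ) ^ ((1 : ℝ) / 4)))) ≤ K / n ^ 2 := by
  refine ⟨2 * (Nat.factorial 16 : ℝ) / c ^ 16, by positivity, fun n hn => ?_⟩
  have hn' : (0 : ℝ) < n := by exact_mod_cast hn
  set x := (n : ℝ) ^ ((1 : ℝ) / 4) with hx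
  have hx0 : 0 < x := Real.rpow_pos_of_pos hn' _
  have hx16 : x ^ 16 = (n : ℝ) ^ 4 := by
    rw [hx, ← Real.rpow_natCast, ← Real.rpow_mul hn'.le, ← Real.rpow_natCast]; norm_num
  have h := Real.pow_div_factorial_le_exp (c * x) (by positivity) 16
  rw [mul_pow, hx16] at h
  rw [Real.exp_neg]
  have hfac : (0 : ℝ) < (Nat.factorial 16 : ℝ) := by exact_mod_cast Nat.factorial_pos 16
  have hp : 0 < c ^ 16 * (n : ℝ) ^ 4 / (Nat.factorial 16 : ℝ) := by positivity
  have h2 := inv_anti₀ hp h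
  calc _ ≤ (n : ℝ) ^ 2 * (2 * (c ^ 16 * (n : ℝ) ^ 4 / (Nat.factorial 16 : ℝ))⁻¹) := by gcongr
    _ = _ := by
      generalize (Nat.factorial 16 : ℝ) = F at *
      field_simp

lemma oi_tail2 (Γ : ℝ) (hΓ : 0 < Γ) (n d : ℕ) (hn : 1 ≤ n) (hnd : (n : ℝ) ≤ Γ * d) :
    Real.exp (-d) ≤ 2 * Γ ^ 2 / n ^ 2 := by
  have hn' : (0 : ℝ) < n := by exact_mod_cast hn
  have h := Real.pow_div_factorial_le_exp (d : ℝ) (by positivity) 2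
  have hd : (0 : ℝ) < d := by
    by_contra h0
    have : (d : ℝ) ≤ 0 := not_lt.1 h0
    nlinarith
  rw [Real.exp_neg]
  have h2 := inv_anti₀ (by positivity) h
  refine h2.trans ?_
  rw [inv_div, show ((Nat.factorial 2 : ℕ) : ℝ) = 2 by norm_num [Nat.factorial]]
  rw [div_le_div_iff₀ (by positivity) (by positivity)]
  have : (n : ℝ) ^ 2 ≤ (Γ * d) ^ 2 := pow_le_pow_left₀ hn'.le hnd 2
  nlinarith

section
variable {σ σ' : ℝ → ℝ} {lam : ℝ}

set_option maxHeartbeats 1000000 in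
lemma oi_step (hl : 0 ≤ lam) (hd : ∀ x, HasDerivAt σ (σ' x) x) (hb : ∀ x, |σ' x| ≤ lam) (hc' : Continuous σ')
    (hmean : ∫ x, σ x ∂(gaussianReal 0 1) = 0) (hvar : ∫ x, σ x ^ 2 ∂(gaussianReal 0 1) = 1)
    (Γ B : ℝ) (hΓ : 0 < Γ) (hB : 0 ≤ B) :
    ∃ (C B' K : ℝ) (N : ℕ), 0 ≤ C ∧ 0 ≤ B' ∧ 0 ≤ K ∧ ∀ (n d m : ℕ), N ≤ n → (n : ℝ) ≤ Γ * d → ∀ ε : ℝ, ε ≤ 1 / 2 →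
      ∀ X : Matrix (Fin m) (Fin n) ℝ, IsOrthonormal ε B X →
      gaussianMat d m {W | ¬ IsOrthonormal (C * (ε + (n : ℝ) ^ (-(3 : ℝ) / 8))) B' (oiY σ X W)} ≤ ENNReal.ofReal (K / n ^ 2) := by
  have hL := oi_lip hl hd hb
  have hc := oi_cont hd
  obtain ⟨B1, hop⟩ := oi_op hl hd hb hc' hmean Γ B hΓ.le hB
  obtain ⟨t0, C, ht0, hC, hconc⟩ := oi_concBC hl hd hb hc' B
  obtain ⟨K, hK, hK2⟩ := oi_tail (1 / (4 * (C + 1)) / Γ) (by positivity)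
  set τ := (t0 ^ 2 * C + 2 * Γ + 1) / t0 with hτ
  have hτ0 : 0 ≤ τ := by positivity
  set C2 := lam * (2 * |σ 0| + 3 * lam) with hC2
  set C3 := lam * (5 * |σ 0| + 6 * lam) with hC3
  have hC20 : 0 ≤ C2 := by positivity
  have hC30 : 0 ≤ C3 := by positivity
  have hev : ∀ᶠ n : ℕ in atTop, (n : ℝ) ^ (-(3 : ℝ) / 8) < 2 * (C + 1) * t0 := by
    have h1 : Tendsto (fun n : ℕ => (n : ℝ) ^ (-((3 : ℝ) / 8))) atTop (𝓝 0) :=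
      (tendsto_rpow_neg_atTop (by norm_num)).comp tendsto_natCast_atTop_atTop
    have := h1.eventually (gt_mem_nhds (by positivity : 0 < 2 * (C + 1) * t0))
    simpa [neg_div] using this
  obtain ⟨N, hN⟩ := eventually_atTop.1 hev
  refine ⟨1 + C2 + C3, |B1| + 4 * τ + 2 * C2 * B, 2 * (2 * Γ ^ 2) + K, max N 1, by positivity, by positivity, by positivity, ?_⟩
  intro n d m hn hnd ε hε X hX
  have hn1 : 1 ≤ n := (le_max_right _ _).trans hn
  have hn' : (0 : ℝ) < n := by exact_mod_cast hn1
  have hδ2 := hN n ((le_max_left _ _).trans hn)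
  set δ := (n : ℝ) ^ (-(3 : ℝ) / 8) with hδ
  have hδ0 : 0 < δ := Real.rpow_pos_of_pos hn' _
  have hdpos : (0 : ℝ) < d := by
    by_contra h0
    have : (d : ℝ) ≤ 0 := not_lt.1 h0
    nlinarith
  have hd0 : 0 < d := by exact_mod_cast hdpos
  have hX2 : ∀ α, ∑ j, X j α ^ 2 ≤ 2 := fun α => by
    have := (abs_le.1 (hX.1 α)).2; linarith
  have hε0 : 0 ≤ ε := (abs_nonneg _).trans (hX.1 ⟨0, hn1⟩)
  obtain ⟨hcB, hcC⟩ := hconc m n X hX.2.2.1 hX2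
  have p1 := hop n d m hd0 hnd ε X hX
  have p2 := oi_sq ht0 hC hl hd hb Γ hΓ.le n d m hd0 hnd X hcB
  have p3 := fun α β => oi_pair hC hd n d m hd0 X α β (hcC α β) δ hδ0.le (by
    rw [div_le_iff₀ (by positivity)]; linarith)
  set S1 := {W : Fin d → Fin m → ℝ | ¬ opNorm (oiY σ X W) ≤ B1} with hS1
  set S2 := {W : Fin d → Fin m → ℝ | ¬ ∑ α, ((∑ i, oiY σ X W i α ^ 2) - ∫ w, σ (oiG X w α) ^ 2 ∂(gaussianVec m)) ^ 2 ≤ (2 * ((t0 ^ 2 * C + 2 * Γ + 1) / t0)) ^ 2} with hS2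
  let S3 : Fin n → Fin n → Set (Fin d → Fin m → ℝ) := fun α β =>
    {W | ¬ |∑ i, oiY σ X W i α * oiY σ X W i β - ∫ z, (σ (oiG X z α) * σ (oiG X z β)) ∂(gaussianVec m)| ≤ δ}
  have hM2 : ∀ α, |∫ w, σ (oiG X w α) ^ 2 ∂(gaussianVec m) - 1| ≤ C2 * |∑ j, X j α ^ 2 - 1| :=
    fun α => oi_M2 hl hL hc hvar (fun j => X j α) (hX2 α)
  have hsub : {W | ¬ IsOrthonormal ((1 + C2 + C3) * (ε + δ)) (|B1| + 4 * τ + 2 * C2 * B) (oiY σ X W)} ⊆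
      S1 ∪ S2 ∪ ⋃ α, ⋃ β, S3 α β := by
    intro W hW
    by_contra hcon
    simp only [Set.mem_union, Set.mem_iUnion, not_or, not_exists] at hcon
    obtain ⟨⟨q1, q2⟩, q3⟩ := hcon
    have q1 : opNorm (oiY σ X W) ≤ B1 := not_not.1 q1
    have q2 : ∑ α, ((∑ i, oiY σ X W i α ^ 2) - ∫ w, σ (oiG X w α) ^ 2 ∂(gaussianVec m)) ^ 2 ≤ (2 * τ) ^ 2 := not_not.1 q2
    have q3 : ∀ α β, |∑ i, oiY σ X W i α * oiY σ X W i β - ∫ z, (σ (oiG X z α) * σ (oiG X z β)) ∂(gaussianVec m)| ≤ δ :=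
      fun α β => not_not.1 (q3 α β)
    apply hW
    refine ⟨fun α => ?_, fun α β hab => ?_, ?_, ?_⟩
    · have h1 := q3 α α
      simp only [← sq] at h1
      have h2 := (hM2 α).trans (mul_le_mul_of_nonneg_left (hX.1 α) hC20)
      have h3 := abs_sub_le (∑ i, oiY σ X W i α ^ 2) (∫ w, σ (oiG X w α) ^ 2 ∂(gaussianVec m)) 1
      nlinarith [mul_nonneg hC20 hδ0.le, mul_nonneg hC30 hδ0.le, mul_nonneg hC30 hε0]
    · have h1 := q3 α β
      have h2 := oi_M3 hl hL hc hmean (fun j => X j α) (fun j => X j β) ε hε (hX.1 α) (hX.1 β) (hX.2.1 α β hab)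
      have h3 := abs_sub_abs_le_abs_sub (∑ i, oiY σ X W i α * oiY σ X W i β) (∫ z, (σ (oiG X z α) * σ (oiG X z β)) ∂(gaussianVec m))
      have h2 : |∫ z, (σ (oiG X z α) * σ (oiG X z β)) ∂(gaussianVec m)| ≤ C3 * ε := h2
      nlinarith [mul_nonneg hC20 hδ0.le, mul_nonneg hC30 hδ0.le, mul_nonneg hC20 hε0]
    · have := le_abs_self B1
      have : 0 ≤ 2 * C2 * B := by positivity
      linarith
    · have h1 : ∑ α, ((∑ i, oiY σ X W i α ^ 2) - 1) ^ 2 ≤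
          2 * ∑ α, ((∑ i, oiY σ X W i α ^ 2) - ∫ w, σ (oiG X w α) ^ 2 ∂(gaussianVec m)) ^ 2 +
          2 * (C2 ^ 2 * ∑ α, ((∑ j, X j α ^ 2) - 1) ^ 2) := by
        rw [Finset.mul_sum, Finset.mul_sum, Finset.mul_sum, ← Finset.sum_add_distrib]
        refine Finset.sum_le_sum fun α _ => ?_
        have h2 : (∫ w, σ (oiG X w α) ^ 2 ∂(gaussianVec m) - 1) ^ 2 ≤ C2 ^ 2 * ((∑ j, X j α ^ 2) - 1) ^ 2 := by
          rw [← sq_abs, ← sq_abs (∑ j, X j α ^ 2 - 1), ← mul_pow]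
          exact pow_le_pow_left₀ (abs_nonneg _) (hM2 α) 2
        nlinarith [sq_nonneg ((∑ i, oiY σ X W i α ^ 2) - ∫ w, σ (oiG X w α) ^ 2 ∂(gaussianVec m) - (∫ w, σ (oiG X w α) ^ 2 ∂(gaussianVec m) - 1))]
      have h2 := mul_le_mul_of_nonneg_left hX.2.2.2 (sq_nonneg C2)
      have h3 : 0 ≤ C2 * B := by positivity
      have h4 : (4 * τ + 2 * (C2 * B)) ^ 2 ≤ (|B1| + 4 * τ + 2 * C2 * B) ^ 2 := by
        apply pow_le_pow_left₀ (by positivity)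
        nlinarith [abs_nonneg B1]
      have h5 : 2 * (2 * τ) ^ 2 + 2 * (C2 ^ 2 * B ^ 2) ≤ (4 * τ + 2 * (C2 * B)) ^ 2 := by
        have h6 : C2 ^ 2 * B ^ 2 = (C2 * B) ^ 2 := by ring
        rw [h6]
        generalize C2 * B = y at h3 ⊢
        nlinarith [mul_nonneg hτ0 h3, sq_nonneg y, sq_nonneg τ]
      linarith
  have hexp : -(d * δ ^ 2) / (4 * (C + 1)) ≤ -(1 / (4 * (C + 1)) / Γ * (n : ℝ) ^ ((1 : ℝ) / 4)) := by
    have e1 : (n : ℝ) * δ ^ 2 = (n : ℝ) ^ ((1 : ℝ) / 4) := by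
      rw [hδ, ← Real.rpow_natCast, ← Real.rpow_mul hn'.le, ← Real.rpow_one_add' hn'.le (by norm_num)]
      norm_num
    rw [← e1]
    have e2 : (n : ℝ) * δ ^ 2 ≤ Γ * d * δ ^ 2 := by gcongr
    rw [neg_div, neg_le_neg_iff, one_div, div_mul_eq_mul_div, div_le_iff₀ hΓ, div_eq_mul_inv]
    have e3 : 0 < (4 * (C + 1))⁻¹ := by positivity
    nlinarith
  calc _ ≤ _ := measure_mono hsub
    _ ≤ gaussianMat d m (S1 ∪ S2) + gaussianMat d m (⋃ α, ⋃ β, S3 α β) := measure_union_le _ _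
    _ ≤ (gaussianMat d m S1 + gaussianMat d m S2) + ∑ α, ∑ β, gaussianMat d m (S3 α β) := by
        gcongr
        · exact measure_union_le _ _
        · refine (measure_iUnion_fintype_le _ _).trans (Finset.sum_le_sum fun α _ => measure_iUnion_fintype_le _ _)
    _ ≤ (ENNReal.ofReal (2 * Γ ^ 2 / n ^ 2) + ENNReal.ofReal (2 * Γ ^ 2 / n ^ 2)) +
        ∑ α : Fin n, ∑ β : Fin n, ENNReal.ofReal (2 * Real.exp (-(1 / (4 * (C + 1)) / Γ * (n : ℝ) ^ ((1 : ℝ) / 4)))) := by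
        have h2 := ENNReal.ofReal_le_ofReal (oi_tail2 Γ hΓ n d hn1 hnd)
        gcongr with α _ β _
        · exact p1.trans h2
        · exact p2.trans h2
        · refine (p3 α β).trans (ENNReal.ofReal_le_ofReal ?_)
          gcongr
    _ = ENNReal.ofReal (2 * Γ ^ 2 / n ^ 2 + 2 * Γ ^ 2 / n ^ 2 + (n : ℝ) ^ 2 * (2 * Real.exp (-(1 / (4 * (C + 1)) / Γ * (n : ℝ) ^ ((1 : ℝ) / 4))))) := by
        rw [ENNReal.ofReal_add (by positivity) (by positivity), ENNReal.ofReal_add (by positivity) (by positivity),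
          ENNReal.ofReal_mul (by positivity : (0 : ℝ) ≤ (n : ℝ) ^ 2)]
        congr 1
        simp only [Finset.sum_const, Finset.card_univ, Fintype.card_fin, nsmul_eq_mul]
        rw [← mul_assoc, sq, ENNReal.ofReal_mul hn'.le, ENNReal.ofReal_natCast]
    _ ≤ _ := by
        apply ENNReal.ofReal_le_ofReal
        have := hK2 n hn1
        rw [add_div]
        have e : 2 * (2 * Γ ^ 2) / (n : ℝ) ^ 2 = 2 * Γ ^ 2 / n ^ 2 + 2 * Γ ^ 2 / n ^ 2 := by ring
        rw [e]; linarith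

end

open MeasureTheory ProbabilityTheory Filter Topology Matrix

lemma oi_netLayer_congr (σ : ℝ → ℝ) (d : ℕ → ℕ) (n : ℕ) (W W' : (ℓ : ℕ) → Fin (d (ℓ + 1)) → Fin (d ℓ) → ℝ)
    (X0 : Matrix (Fin (d 0)) (Fin n) ℝ) (ℓ : ℕ) (h : ∀ m < ℓ, W m = W' m) :
    netLayer σ d n W X0 ℓ = netLayer σ d n W' X0 ℓ := by
  induction ℓ with
  | zero => rfl
  | succ ℓ ih =>
    simp only [netLayer]
    rw [ih fun m hm => h m (hm.trans ℓ.lt_succ_self), h ℓ ℓ.lt_succ_self]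

/-- extension of finitely many weights by zero -/
def oiExt (d : ℕ → ℕ) (L : ℕ) (V : (ℓ : Fin L) → Fin (d ((ℓ : ℕ) + 1)) → Fin (d (ℓ : ℕ)) → ℝ) (ℓ : ℕ) :
    Fin (d (ℓ + 1)) → Fin (d ℓ) → ℝ :=
  if h : ℓ < L then V ⟨ℓ, h⟩ else 0

lemma oi_opNorm_cont (m n : ℕ) : Continuous fun X : Fin m → Fin n → ℝ => opNorm (Matrix.of X) := by
  unfold opNorm
  let A : (Fin m → Fin n → ℝ) →ₗ[ℝ] (EuclideanSpace ℝ (Fin n) →L[ℝ] EuclideanSpace ℝ (Fin m)) :=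
    (LinearMap.toContinuousLinearMap.toLinearMap.comp (Matrix.toEuclideanLin (𝕜 := ℝ)).toLinearMap).comp
      (Matrix.ofLinearEquiv ℝ).toLinearMap
  have hA : Continuous A := LinearMap.continuous_of_finiteDimensional A
  exact hA.norm

lemma oi_orth_meas {Ω : Type*} [MeasurableSpace Ω] {m n : ℕ} (T : Ω → Matrix (Fin m) (Fin n) ℝ)
    (hT : ∀ i α, Measurable fun ω => T ω i α) (ε B : ℝ) : MeasurableSet {ω | IsOrthonormal ε B (T ω)} := by
  have h1 : Measurable fun ω => opNorm (T ω) :=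
    (oi_opNorm_cont m n).measurable.comp (measurable_pi_iff.2 fun i => measurable_pi_iff.2 fun α => hT i α)
  have m1 : MeasurableSet (⋂ α, {ω | |(∑ i, T ω i α ^ 2) - 1| ≤ ε}) :=
    MeasurableSet.iInter fun α => measurableSet_le (by fun_prop) (by fun_prop)
  have m2 : MeasurableSet (⋂ α, ⋂ β, ⋂ (_ : α ≠ β), {ω | |∑ i, T ω i α * T ω i β| ≤ ε}) :=
    MeasurableSet.iInter fun α => MeasurableSet.iInter fun β => MeasurableSet.iInter fun _ =>
      measurableSet_le (by fun_prop) (by fun_prop)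
  have m3 : MeasurableSet {ω | opNorm (T ω) ≤ B} := measurableSet_le h1 measurable_const
  have m4 : MeasurableSet {ω | ∑ α, ((∑ i, T ω i α ^ 2) - 1) ^ 2 ≤ B ^ 2} :=
    measurableSet_le (by fun_prop) (by fun_prop)
  have e : {ω | IsOrthonormal ε B (T ω)} = (⋂ α, {ω | |(∑ i, T ω i α ^ 2) - 1| ≤ ε}) ∩
      ((⋂ α, ⋂ β, ⋂ (_ : α ≠ β), {ω | |∑ i, T ω i α * T ω i β| ≤ ε}) ∩
      ({ω | opNorm (T ω) ≤ B} ∩ {ω | ∑ α, ((∑ i, T ω i α ^ 2) - 1) ^ 2 ≤ B ^ 2})) := by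
    ext ω
    simp only [IsOrthonormal, Set.mem_inter_iff, Set.mem_iInter, Set.mem_ofPred_eq]
  rw [e]
  exact m1.inter (m2.inter (m3.inter m4))

lemma oi_ext_meas (d : ℕ → ℕ) (L : ℕ) (ℓ : ℕ) : Measurable fun V => oiExt d L V ℓ := by
  unfold oiExt
  split_ifs with h
  · exact measurable_pi_apply _
  · exact measurable_const

lemma oi_net_meas (σ : ℝ → ℝ) (hc : Continuous σ) (d : ℕ → ℕ) (L n : ℕ) (X0 : Matrix (Fin (d 0)) (Fin n) ℝ) (ℓ : ℕ) :
    ∀ i α, Measurable fun V => netLayer σ d n (oiExt d L V) X0 ℓ i α := by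
  induction ℓ with
  | zero => intro i α; exact measurable_const
  | succ ℓ ih =>
    intro i α
    simp only [netLayer, Matrix.smul_apply, Matrix.map_apply, Matrix.mul_apply, Matrix.of_apply, smul_eq_mul]
    refine Measurable.const_mul (hc.measurable.comp ?_) _
    refine Finset.measurable_sum _ fun j _ => ?_
    refine Measurable.mul ?_ (ih j α)
    exact (measurable_pi_apply j).comp ((measurable_pi_apply i).comp (oi_ext_meas d L ℓ))

lemma oi_bad (σ : ℝ → ℝ) (hc : Continuous σ) (d : ℕ → ℕ) (L n : ℕ) (X0 : Matrix (Fin (d 0)) (Fin n) ℝ) (ℓ : ℕ) (hℓ : ℓ < L)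
    (ε B ε' B' : ℝ) (p : ENNReal)
    (h : ∀ X : Matrix (Fin (d ℓ)) (Fin n) ℝ, IsOrthonormal ε B X →
      gaussianMat (d (ℓ + 1)) (d ℓ) {W | ¬ IsOrthonormal ε' B' (oiY σ X W)} ≤ p) :
    Measure.pi (fun ℓ : Fin L => gaussianMat (d ((ℓ : ℕ) + 1)) (d (ℓ : ℕ)))
      {V | IsOrthonormal ε B (netLayer σ d n (oiExt d L V) X0 ℓ) ∧ ¬ IsOrthonormal ε' B' (netLayer σ d n (oiExt d L V) X0 (ℓ + 1))} ≤ p := by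
  set S := {V : (ℓ : Fin L) → Fin (d ((ℓ : ℕ) + 1)) → Fin (d (ℓ : ℕ)) → ℝ | IsOrthonormal ε B (netLayer σ d n (oiExt d L V) X0 ℓ) ∧ ¬ IsOrthonormal ε' B' (netLayer σ d n (oiExt d L V) X0 (ℓ + 1))} with hS
  have hSm : MeasurableSet S :=
    (oi_orth_meas _ (oi_net_meas σ hc d L n X0 ℓ) ε B).inter (oi_orth_meas _ (oi_net_meas σ hc d L n X0 (ℓ + 1)) ε' B').compl
  have hfm : Measurable (S.indicator (fun _ => (1 : ENNReal))) := measurable_const.indicator hSm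
  rw [← lintegral_indicator_one hSm]
  have key := lintegral_le_of_lmarginal_le (μ := fun ℓ : Fin L => gaussianMat (d ((ℓ : ℕ) + 1)) (d (ℓ : ℕ))) {(⟨ℓ, hℓ⟩ : Fin L)}
    hfm (measurable_const (a := p)) ?_
  · refine key.trans ?_
    simp
  rw [lmarginal_singleton, lmarginal_singleton]
  intro x
  simp only [lintegral_const, measure_univ, mul_one]
  have e1 : ∀ W, netLayer σ d n (oiExt d L (Function.update x ⟨ℓ, hℓ⟩ W)) X0 ℓ = netLayer σ d n (oiExt d L x) X0 ℓ := by
    intro W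
    refine oi_netLayer_congr _ _ _ _ _ _ _ fun m hm => ?_
    unfold oiExt
    rw [dif_pos (hm.trans hℓ), dif_pos (hm.trans hℓ), Function.update_of_ne]
    intro hcon
    have := congrArg Fin.val hcon
    simp only at this
    omega
  have e2 : ∀ W, netLayer σ d n (oiExt d L (Function.update x ⟨ℓ, hℓ⟩ W)) X0 (ℓ + 1) = oiY σ (netLayer σ d n (oiExt d L x) X0 ℓ) W := by
    intro W
    rw [netLayer, e1, oiY]
    have : oiExt d L (Function.update x ⟨ℓ, hℓ⟩ W) ℓ = W := by
      unfold oiExt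
      rw [dif_pos hℓ, Function.update_self]
    rw [this]
  by_cases hx : IsOrthonormal ε B (netLayer σ d n (oiExt d L x) X0 ℓ)
  · have h1 := h _ hx
    refine le_trans ?_ h1
    refine le_trans (lintegral_mono (g := Set.indicator {W | ¬ IsOrthonormal ε' B' (oiY σ (netLayer σ d n (oiExt d L x) X0 ℓ) W)} (fun _ => (1 : ENNReal))) fun W => ?_) (lintegral_indicator_one_le _)
    by_cases hW : Function.update x ⟨ℓ, hℓ⟩ W ∈ S
    · have h2 : W ∈ {W | ¬ IsOrthonormal ε' B' (oiY σ (netLayer σ d n (oiExt d L x) X0 ℓ) W)} := by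
        have := hW.2
        rw [e2] at this
        exact this
      rw [Set.indicator_of_mem h2]
      exact Set.indicator_le_self' (fun _ _ => zero_le) _
    · rw [Set.indicator_of_notMem hW]
      exact zero_le
  · have : ∀ W, S.indicator (fun _ => (1 : ENNReal)) (Function.update x ⟨ℓ, hℓ⟩ W) = 0 := by
      intro W
      apply Set.indicator_of_notMem
      intro hmem
      have := hmem.1
      rw [e1] at this
      exact hx this
    simp only [this, lintegral_zero]
    exact zero_le

lemma oi_mono {m n : ℕ} {ε ε' B B' : ℝ} {X : Matrix (Fin m) (Fin n) ℝ} (h : IsOrthonormal ε B X) (h1 : ε ≤ ε') (h2 : B ≤ B')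
    (h0 : 0 ≤ B) : IsOrthonormal ε' B' X :=
  ⟨fun α => (h.1 α).trans h1, fun α β hab => (h.2.1 α β hab).trans h1, h.2.2.1.trans h2,
    h.2.2.2.trans (pow_le_pow_left₀ h0 h2 2)⟩

open MeasureTheory ProbabilityTheory Filter Topology Matrix

theorem orthonormal_induction
    (L : ℕ) (hL : 1 ≤ L)
    (d : ℕ → ℕ → ℕ)
    (σ σ' σ'' : ℝ → ℝ) (lamσ : ℝ)
    (hderiv1 : ∀ x, HasDerivAt σ (σ' x) x)
    (hderiv2 : ∀ x, HasDerivAt σ' (σ'' x) x)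
    (hσ'bdd : ∀ x, |σ' x| ≤ lamσ) (hσ''bdd : ∀ x, |σ'' x| ≤ lamσ)
    (hmean : (∫ x, σ x ∂stdGaussian) = 0)
    (hvar : (∫ x, (σ x) ^ 2 ∂stdGaussian) = 1)
    (Ω : Type*) [MeasurableSpace Ω] (Pr : Measure Ω) [IsProbabilityMeasure Pr]
    (W : (n : ℕ) → (ℓ : ℕ) → Ω → Fin (d n (ℓ + 1)) → Fin (d n ℓ) → ℝ)
    (hW : ∀ n : ℕ, Measure.map (fun ω => fun ℓ : Fin L => W n ℓ ω) Pr =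
      Measure.pi (fun ℓ : Fin L => gaussianMat (d n ((ℓ : ℕ) + 1)) (d n (ℓ : ℕ))))
    (X0 : (n : ℕ) → Matrix (Fin (d n 0)) (Fin n) ℝ)
    (ε : ℕ → ℝ) (B : ℝ)
    (hX0orth : ∀ n, IsOrthonormal (ε n) B (X0 n))
    (hε : Tendsto (fun n : ℕ => ε n * (n : ℝ) ^ ((1 : ℝ) / 4)) atTop (𝓝 0))
    (γ : ℕ → ℝ) (hγ : ∀ ℓ, 1 ≤ ℓ → ℓ ≤ L → 0 < γ ℓ)
    (hdim : ∀ ℓ, 1 ≤ ℓ → ℓ ≤ L →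
      Tendsto (fun n : ℕ => (n : ℝ) / (d n ℓ : ℝ)) atTop (𝓝 (γ ℓ))) :
    ∃ (ε' : ℕ → ℝ) (B' : ℝ),
      Tendsto (fun n : ℕ => ε' n * (n : ℝ) ^ ((1 : ℝ) / 4)) atTop (𝓝 0) ∧
      ∀ᵐ ω ∂Pr, ∀ᶠ n : ℕ in atTop, ∀ ℓ ≤ L,
        IsOrthonormal (ε' n) B' (netLayer σ (d n) n (fun m => W n m ω) (X0 n) ℓ) := by
  have hl : 0 ≤ lamσ := (abs_nonneg _).trans (hσ'bdd 0)
  have hc' : Continuous σ' := oi_cont hderiv2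
  have hc : Continuous σ := oi_cont hderiv1
  have hB0 : 0 ≤ B := (oi_opNorm_nonneg _).trans (hX0orth 0).2.2.1
  have hWm : ∀ n : ℕ, AEMeasurable (fun ω => fun ℓ : Fin L => W n ℓ ω) Pr := by
    intro n
    apply aemeasurable_of_map_neZero
    rw [hW n]
    infer_instance
  have claim : ∀ ℓ, ℓ ≤ L → ∃ (e : ℕ → ℝ) (b K : ℝ), 0 ≤ b ∧ 0 ≤ K ∧
      Tendsto (fun n : ℕ => e n * (n : ℝ) ^ ((1 : ℝ) / 4)) atTop (𝓝 0) ∧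
      ∀ᶠ n : ℕ in atTop, Pr {ω | ¬ IsOrthonormal (e n) b (netLayer σ (d n) n (fun m => W n m ω) (X0 n) ℓ)} ≤ ENNReal.ofReal (K / n ^ 2) := by
    intro ℓ
    induction ℓ with
    | zero =>
      intro _
      refine ⟨ε, B, 0, hB0, le_rfl, hε, Eventually.of_forall fun n => ?_⟩
      have : {ω | ¬ IsOrthonormal (ε n) B (netLayer σ (d n) n (fun m => W n m ω) (X0 n) 0)} = (∅ : Set Ω) := by
        ext ω
        simp only [Set.mem_ofPred_eq, Set.mem_empty_iff_false, iff_false, not_not]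
        exact hX0orth n
      rw [this, measure_empty]
      exact zero_le
    | succ ℓ ih =>
      intro hℓ
      obtain ⟨e, b, K, hb, hK, he, hev⟩ := ih (by omega)
      have hγ0 := hγ (ℓ + 1) (by omega) hℓ
      obtain ⟨C, B', K', N, hC, hB', hK', hstep⟩ := oi_step hl hderiv1 hσ'bdd hc' hmean hvar (γ (ℓ + 1) + 1) b (by linarith) hb
      refine ⟨fun n => C * (e n + (n : ℝ) ^ (-(3 : ℝ) / 8)), B', K + K', hB', by positivity, ?_, ?_⟩
      · have h1 : Tendsto (fun n : ℕ => (n : ℝ) ^ (-((1 : ℝ) / 8))) atTop (𝓝 0) :=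
          (tendsto_rpow_neg_atTop (by norm_num)).comp tendsto_natCast_atTop_atTop
        have h2 := (he.add h1).const_mul C
        rw [add_zero, mul_zero] at h2
        refine h2.congr' ?_
        filter_upwards [eventually_ge_atTop 1] with n hn
        have hn' : (0 : ℝ) < n := by exact_mod_cast hn
        have h3 : (n : ℝ) ^ (-((1 : ℝ) / 8)) = (n : ℝ) ^ (-(3 : ℝ) / 8) * (n : ℝ) ^ ((1 : ℝ) / 4) := by
          rw [← Real.rpow_add hn']; norm_num
        rw [h3]; ring
      · have hdl := hdim (ℓ + 1) (by omega) hℓ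
        filter_upwards [hev, eventually_ge_atTop (max N 1), hdl.eventually (lt_mem_nhds hγ0),
          hdl.eventually (gt_mem_nhds (lt_add_one (γ (ℓ + 1)))), he.eventually (gt_mem_nhds (by norm_num : (0 : ℝ) < 1 / 2))]
          with n h1 hn hd1 hd2 hen
        have hn1 : 1 ≤ n := (le_max_right _ _).trans hn
        have hn' : (1 : ℝ) ≤ n := by exact_mod_cast hn1
        have hen2 : e n ≤ 1 / 2 := by
          by_contra hcon
          have h2 : 1 / 2 < e n := not_le.1 hcon
          have h3 : (1 : ℝ) ≤ (n : ℝ) ^ ((1 : ℝ) / 4) := Real.one_le_rpow hn' (by norm_num)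
          nlinarith
        have hnd : (n : ℝ) ≤ (γ (ℓ + 1) + 1) * d n (ℓ + 1) := by
          have hdpos : (0 : ℝ) < d n (ℓ + 1) := by
            rcases (Nat.cast_nonneg (α := ℝ) (d n (ℓ + 1))).lt_or_eq with h | h
            · exact h
            · rw [← h, div_zero] at hd1; exact absurd hd1 (lt_irrefl _)
          rw [div_lt_iff₀ hdpos] at hd2
          exact hd2.le
        have hbad := oi_bad σ hc (d n) L n (X0 n) ℓ (by omega) (e n) b (C * (e n + (n : ℝ) ^ (-(3 : ℝ) / 8))) B'
          (ENNReal.ofReal (K' / n ^ 2)) (fun X hX => hstep n _ _ ((le_max_left _ _).trans hn) hnd (e n) hen2 X hX)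
        rw [← hW n] at hbad
        have hbad2 := (Measure.le_map_apply (hWm n) _).trans hbad
        have hcongr : ∀ (ω : Ω) (k : ℕ), k ≤ L → netLayer σ (d n) n (oiExt (d n) L (fun ℓ : Fin L => W n ℓ ω)) (X0 n) k =
            netLayer σ (d n) n (fun m => W n m ω) (X0 n) k := by
          intro ω k hk
          refine oi_netLayer_congr _ _ _ _ _ _ _ fun m hm => ?_
          unfold oiExt
          rw [dif_pos (by omega)]
        rw [add_div, ENNReal.ofReal_add (by positivity) (by positivity)]
        refine le_trans (measure_mono ?_) ((measure_union_le _ _).trans (add_le_add h1 hbad2))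
        intro ω hω
        by_cases hg : IsOrthonormal (e n) b (netLayer σ (d n) n (fun m => W n m ω) (X0 n) ℓ)
        · right
          refine ⟨?_, ?_⟩
          · rw [hcongr ω ℓ (by omega)]; exact hg
          · rw [hcongr ω (ℓ + 1) hℓ]; exact hω
        · left; exact hg
  choose! e b K hb hK he hev using claim
  refine ⟨fun n => ∑ ℓ ∈ Finset.range (L + 1), |e ℓ n|, ∑ ℓ ∈ Finset.range (L + 1), b ℓ, ?_, ?_⟩
  · have h1 : Tendsto (fun n : ℕ => ∑ ℓ ∈ Finset.range (L + 1), |e ℓ n * (n : ℝ) ^ ((1 : ℝ) / 4)|) atTop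
        (𝓝 (∑ ℓ ∈ Finset.range (L + 1), |(0 : ℝ)|)) := by
      refine tendsto_finsetSum _ fun ℓ hℓ => (he ℓ ?_).abs
      have := Finset.mem_range.1 hℓ
      omega
    simp only [abs_zero, Finset.sum_const_zero] at h1
    refine h1.congr fun n => ?_
    rw [Finset.sum_mul]
    refine Finset.sum_congr rfl fun ℓ _ => ?_
    rw [abs_mul, abs_of_nonneg (by positivity : (0 : ℝ) ≤ (n : ℝ) ^ ((1 : ℝ) / 4))]
  · have hae : ∀ ℓ ∈ Finset.range (L + 1), ∀ᵐ ω ∂Pr, ∀ᶠ n : ℕ in atTop,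
        IsOrthonormal (e ℓ n) (b ℓ) (netLayer σ (d n) n (fun m => W n m ω) (X0 n) ℓ) := by
      intro ℓ hℓ
      have hℓ' : ℓ ≤ L := by have := Finset.mem_range.1 hℓ; omega
      obtain ⟨N, hN⟩ := eventually_atTop.1 (hev ℓ hℓ')
      let s : ℕ → Set Ω := fun n => if N ≤ n then {ω | ¬ IsOrthonormal (e ℓ n) (b ℓ) (netLayer σ (d n) n (fun m => W n m ω) (X0 n) ℓ)} else ∅
      have hs : ∑' n, Pr (s n) ≠ ⊤ := by
        have hsum : Summable fun n : ℕ => K ℓ / (n : ℝ) ^ 2 := by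
          have := (Real.summable_one_div_nat_pow.2 (by norm_num : 1 < 2)).mul_left (K ℓ)
          simpa [div_eq_mul_inv] using this
        have hlt : ∑' n : ℕ, ENNReal.ofReal (K ℓ / (n : ℝ) ^ 2) ≠ ⊤ := hsum.tsum_ofReal_ne_top
        refine ne_top_of_le_ne_top hlt (ENNReal.tsum_le_tsum fun n => ?_)
        by_cases hn : N ≤ n
        · simp only [s, if_pos hn]; exact hN n hn
        · simp only [s, if_neg hn, measure_empty]; exact zero_le
      filter_upwards [ae_eventually_notMem hs] with ω hω
      filter_upwards [hω, eventually_ge_atTop N] with n h1 h2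
      simp only [s, if_pos h2, Set.mem_ofPred_eq, not_not] at h1
      exact h1
    have hall : ∀ᵐ ω ∂Pr, ∀ ℓ ∈ Finset.range (L + 1), ∀ᶠ n : ℕ in atTop,
        IsOrthonormal (e ℓ n) (b ℓ) (netLayer σ (d n) n (fun m => W n m ω) (X0 n) ℓ) :=
      (ae_ball_iff (Finset.range (L + 1)).countable_toSet).2 hae
    filter_upwards [hall] with ω hω
    have hω2 := (Filter.eventually_all_finset (Finset.range (L + 1))).2 hω
    filter_upwards [hω2] with n hn ℓ hℓ
    have hmem : ℓ ∈ Finset.range (L + 1) := Finset.mem_range.2 (by omega)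
    refine oi_mono (hn ℓ hmem) ?_ ?_ (hb ℓ hℓ)
    · refine (le_abs_self _).trans ?_
      exact Finset.single_le_sum (f := fun ℓ => |e ℓ n|) (fun _ _ => abs_nonneg _) hmem
    · refine Finset.single_le_sum (f := b) (fun k hk => hb k ?_) hmem
      have := Finset.mem_range.1 hk
      omega
end

section
/- Let X ∈ ℝ^{d×n} be (ε,B)-orthonormal with ε < 1/λ_σ, and let Φ ∈ ℝ^{n×n} have entries Φ_{αβ} = E_{w~N(0,Id)}[σ(wᵀx_α)σ(wᵀx_β)], where σ is twice differentiable with |σ'|,|σ''| ≤ λ_σ, E[σ(ξ)]=0, E[σ(ξ)²]=1 for ξ ~ N(0,1), and b_σ = E[σ'(ξ)]. Then there is a universal constant C > 0 such that: (i) for all α ≠ β, |Φ_{αβ} − b_σ² x_αᵀx_β| ≤ Cλ_σ²ε²; (ii) for all α, |E_{w~N(0,Id)}[σ(wᵀx_α)]| ≤ Cλ_σ|‖x_α‖²−1| ≤ Cλ_σε; and (iii) for all α, |Φ_{αα} − 1| ≤ Cλ_σ|‖x_α‖²−1| ≤ Cλ_σε. -/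
/-!
Lemma (entries of the second-moment matrix): deterministic bounds on the entries of
`Φ_{αβ} = E[σ(wᵀx_α)σ(wᵀx_β)]` for an `(ε,B)`-orthonormal input matrix.
-/

open MeasureTheory ProbabilityTheory Filter Topology Matrix

lemma gv_meas {d : ℕ} (a : Fin d → ℝ) : Measurable (fun w : Fin d → ℝ => ∑ i, w i * a i) := by
  fun_prop

lemma gv_eval_memLp {d : ℕ} (i : Fin d) : MemLp (fun w : Fin d → ℝ => w i) 2 (gaussianVec d) := by
  have h := measurePreserving_eval (fun _ : Fin d => gaussianReal 0 1) i
  exact (memLp_id_gaussianReal' (μ := 0) (v := 1) 2 (by simp)).comp_measurePreserving h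

lemma gv_indep (d : ℕ) : iIndepFun (fun (i : Fin d) (w : Fin d → ℝ) => w i) (gaussianVec d) :=
  iIndepFun_pi (X := fun _ => id) (fun _ => aemeasurable_id)

lemma gv_cov {d : ℕ} (a b : Fin d → ℝ) :
    cov[fun w : Fin d → ℝ => ∑ i, w i * a i, fun w => ∑ i, w i * b i; gaussianVec d]
      = ∑ i, a i * b i := by
  rw [covariance_fun_sum_fun_sum (fun i => (gv_eval_memLp i).mul_const _)
    (fun i => (gv_eval_memLp i).mul_const _)]
  refine Finset.sum_congr rfl fun i _ => ?_
  rw [Finset.sum_eq_single i]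
  · rw [covariance_mul_const_left, covariance_mul_const_right, covariance_self (measurable_pi_apply i).aemeasurable]
    have h := measurePreserving_eval (fun _ : Fin d => gaussianReal 0 1) i
    have h2 : Var[fun w : Fin d → ℝ => w i; gaussianVec d] = 1 := by
      have := variance_id_gaussianReal (μ := 0) (v := 1)
      rw [← h.map_eq, variance_map aemeasurable_id h.measurable.aemeasurable] at this
      simpa [Function.comp_def, Function.eval] using this
    rw [h2]; ring
  · intro j _ hj
    rw [covariance_mul_const_left, covariance_mul_const_right,
      ((gv_indep d).indepFun hj.symm).covariance_eq_zero (gv_eval_memLp i) (gv_eval_memLp j)]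
    ring
  · simp

lemma gv_gauss (d : ℕ) : HasGaussianLaw (fun w : Fin d → ℝ => w) (gaussianVec d) := by
  refine (gv_indep d).hasGaussianLaw fun i => ?_
  have h := measurePreserving_eval (fun _ : Fin d => gaussianReal 0 1) i
  refine ⟨?_⟩
  have e : (gaussianVec d).map (fun w => w i) = gaussianReal 0 1 := h.map_eq
  rw [e]; infer_instance

lemma gv_gauss_pair {d : ℕ} (a b : Fin d → ℝ) :
    HasGaussianLaw (fun w : Fin d → ℝ => (∑ i, w i * a i, ∑ i, w i * b i)) (gaussianVec d) := by
  let L (a : Fin d → ℝ) : (Fin d → ℝ) →L[ℝ] ℝ :=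
    ∑ i, (a i) • (ContinuousLinearMap.proj (R := ℝ) (φ := fun _ : Fin d => ℝ) i)
  have := (gv_gauss d).map_fun ((L a).prod (L b))
  have e : (fun w : Fin d → ℝ => (∑ i, w i * a i, ∑ i, w i * b i))
      = fun w => ((L a).prod (L b)) w := by
    funext w
    simp [L, _root_.sum_apply, mul_comm]
  rw [e]; exact this

lemma gv_map {d : ℕ} (a : Fin d → ℝ) :
    (gaussianVec d).map (fun w => ∑ i, w i * a i)
      = (gaussianReal 0 1).map (fun x => √(∑ i, a i ^ 2) * x) := by
  have h := (gv_gauss_pair a a).fst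
  rw [h.map_eq_gaussianReal, gaussianReal_map_const_mul]
  have h0 : ∫ w, ∑ i, w i * a i ∂(gaussianVec d) = 0 := by
    rw [integral_finsetSum _ fun i _ => ((gv_eval_memLp i).mul_const _).integrable (by simp)]
    refine Finset.sum_eq_zero fun i _ => ?_
    rw [integral_mul_const]
    have h := measurePreserving_eval (fun _ : Fin d => gaussianReal 0 1) i
    have := integral_id_gaussianReal (μ := 0) (v := 1)
    rw [← h.map_eq, integral_map (measurable_pi_apply i).aemeasurable (by fun_prop)] at this
    rw [show ∫ w : Fin d → ℝ, w i ∂(gaussianVec d) = 0 from this, zero_mul]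
  have hv : Var[fun w => ∑ i, w i * a i; gaussianVec d] = ∑ i, a i ^ 2 := by
    rw [← covariance_self (gv_meas a).aemeasurable, gv_cov]
    simp [sq]
  rw [h0, hv, mul_zero, mul_one]
  congr 1
  ext
  have : 0 ≤ ∑ i, a i ^ 2 := Finset.sum_nonneg fun i _ => sq_nonneg _
  rw [Real.coe_toNNReal _ this]
  simp [Real.sq_sqrt this]

lemma gv_integral {d : ℕ} (a : Fin d → ℝ) (f : ℝ → ℝ) (hf : Continuous f) :
    ∫ w, f (∑ i, w i * a i) ∂(gaussianVec d)
      = ∫ x, f (√(∑ i, a i ^ 2) * x) ∂(gaussianReal 0 1) := by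
  rw [← integral_map (φ := fun w : Fin d → ℝ => ∑ i, w i * a i) (gv_meas a).aemeasurable
    hf.aestronglyMeasurable, gv_map, integral_map (by fun_prop) hf.aestronglyMeasurable]

lemma gv_integral_pair {d : ℕ} (a b : Fin d → ℝ) (hab : ∑ i, a i * b i = 0)
    (f : ℝ × ℝ → ℝ) (hf : Continuous f) :
    ∫ w, f (∑ i, w i * a i, ∑ i, w i * b i) ∂(gaussianVec d)
      = ∫ x, f (√(∑ i, a i ^ 2) * x.1, √(∑ i, b i ^ 2) * x.2)
          ∂((gaussianReal 0 1).prod (gaussianReal 0 1)) := by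
  have hi := (gv_gauss_pair a b).indepFun_of_covariance_eq_zero (by rw [gv_cov, hab])
  rw [indepFun_iff_map_prod_eq_prod_map_map (gv_meas a).aemeasurable (gv_meas b).aemeasurable,
    gv_map, gv_map, Measure.map_prod_map _ _ (by fun_prop) (by fun_prop)] at hi
  rw [← integral_map (φ := fun w : Fin d → ℝ => (∑ i, w i * a i, ∑ i, w i * b i))
    (by fun_prop) hf.aestronglyMeasurable, hi, integral_map (by fun_prop) hf.aestronglyMeasurable]
  rfl

lemma lip_bound {σ σ' : ℝ → ℝ} {lam : ℝ} (h1 : ∀ x, HasDerivAt σ (σ' x) x)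
    (hb : ∀ x, |σ' x| ≤ lam) (x y : ℝ) : |σ x - σ y| ≤ lam * |x - y| := by
  have := Convex.norm_image_sub_le_of_norm_hasDerivWithin_le (f := σ) (f' := σ') (s := Set.univ)
    (C := lam) (x := y) (y := x) (fun z _ => (h1 z).hasDerivWithinAt) (fun z _ => hb z) convex_univ
    trivial trivial
  simpa using this

lemma taylor_bound {σ σ' σ'' : ℝ → ℝ} {lam : ℝ} (h1 : ∀ x, HasDerivAt σ (σ' x) x)
    (h2 : ∀ x, HasDerivAt σ' (σ'' x) x)
    (hb : ∀ x, |σ'' x| ≤ lam) (x h : ℝ) : |σ (h + x) - σ x - h * σ' x| ≤ lam * h ^ 2 := by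
  have hl : 0 ≤ lam := (abs_nonneg _).trans (hb 0)
  have := Convex.norm_image_sub_le_of_norm_hasDerivWithin_le (f := fun y => σ y - y * σ' x)
    (f' := fun y => σ' y - 1 * σ' x) (s := Metric.closedBall x |h|)
    (C := lam * |h|) (x := x) (y := h + x)
    (fun z _ => ((h1 z).sub ((hasDerivAt_id z).mul_const _)).hasDerivWithinAt)
    (fun z hz => by
      rw [one_mul, Real.norm_eq_abs]
      refine (lip_bound h2 hb z x).trans ?_
      rw [Metric.mem_closedBall, Real.dist_eq] at hz
      gcongr) (convex_closedBall _ _)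
    (by simp) (by simp)
  simp only [Real.norm_eq_abs] at this
  calc _ = |σ (h + x) - (h + x) * σ' x - (σ x - x * σ' x)| := by congr 1; ring
    _ ≤ _ := this
    _ = lam * (|h| * |h|) := by rw [add_sub_cancel_right]; ring
    _ = _ := by rw [abs_mul_abs_self]; ring

lemma g_memLp (p : ENNReal) (hp : p ≠ ⊤) : MemLp (fun x : ℝ => x) p (gaussianReal 0 1) :=
  memLp_id_gaussianReal' p hp

lemma g_pow_int (k : ℕ) : Integrable (fun x : ℝ => x ^ k) (gaussianReal 0 1) := by
  rcases eq_or_ne k 0 with rfl | hk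
  · simp
  · have := (g_memLp k (by simp)).integrable_norm_pow hk
    refine this.mono' (by fun_prop) (Eventually.of_forall fun x => by simp)

lemma g_sq : ∫ x, x ^ 2 ∂(gaussianReal 0 1) = 1 := by
  have h := variance_id_gaussianReal (μ := 0) (v := 1)
  rw [variance_eq_integral (by fun_prop)] at h
  simpa using h

lemma g_abs : ∫ x, |x| ∂(gaussianReal 0 1) ≤ 1 := by
  have h : ∫ x, |x| ∂(gaussianReal 0 1) ≤ ∫ x, (1 + x ^ 2) / 2 ∂(gaussianReal 0 1) := by
    refine integral_mono ((g_memLp 1 (by simp)).integrable le_rfl).abs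
      (((integrable_const _).add (g_pow_int 2)).div_const 2) fun x => ?_
    have := sq_nonneg (|x| - 1)
    have h2 := sq_abs x
    simp only
    nlinarith
  rw [integral_div, integral_add (integrable_const _) (g_pow_int 2), g_sq] at h
  simpa using h

lemma lip_memLp {σ : ℝ → ℝ} {lam : ℝ} (hc : Continuous σ)
    (hl : ∀ x y, |σ x - σ y| ≤ lam * |x - y|) (h t : ℝ) (p : ENNReal) (hp : p ≠ ⊤) :
    MemLp (fun x => σ (h + t * x)) p (gaussianReal 0 1) := by
  have h1 : MemLp (fun x : ℝ => |σ h| + lam * (|t| * |x|)) p (gaussianReal 0 1) := by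
    have a1 : MemLp (fun x : ℝ => |x|) p (gaussianReal 0 1) := (g_memLp p hp).norm
    have a2 : MemLp (fun x : ℝ => lam * (|t| * |x|)) p (gaussianReal 0 1) :=
      (a1.const_mul |t|).const_mul lam
    have a3 : MemLp (fun _ : ℝ => |σ h|) p (gaussianReal 0 1) := memLp_const _
    exact a3.add a2
  refine h1.mono (hc.comp (by fun_prop)).aestronglyMeasurable (Eventually.of_forall fun x => ?_)
  have h2 := hl (h + t * x) h
  rw [add_sub_cancel_left, abs_mul] at h2
  rw [Real.norm_eq_abs, Real.norm_eq_abs]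
  refine le_trans ?_ (le_abs_self _)
  have h3 := abs_add_le (σ (h + t * x) - σ h) (σ h)
  rw [sub_add_cancel] at h3
  linarith

lemma lip_memLp0 {σ : ℝ → ℝ} {lam : ℝ} (hc : Continuous σ)
    (hl : ∀ x y, |σ x - σ y| ≤ lam * |x - y|) (t : ℝ) (p : ENNReal) (hp : p ≠ ⊤) :
    MemLp (fun x => σ (t * x)) p (gaussianReal 0 1) := by
  simpa using lip_memLp hc hl 0 t p hp

/-- mean comparison -/
lemma mean_cmp {σ : ℝ → ℝ} {lam : ℝ} (hc : Continuous σ)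
    (hl : ∀ x y, |σ x - σ y| ≤ lam * |x - y|) (hlam : 0 ≤ lam) (s : ℝ) :
    |(∫ x, σ (s * x) ∂(gaussianReal 0 1)) - ∫ x, σ x ∂(gaussianReal 0 1)| ≤ lam * |s - 1| := by
  have i1 := (lip_memLp0 hc hl s 1 (by simp)).integrable le_rfl
  have i2 := (lip_memLp0 hc hl 1 1 (by simp)).integrable le_rfl
  simp only [one_mul] at i2
  rw [← integral_sub i1 i2]
  refine (abs_integral_le_integral_abs).trans ?_
  have i3 := ((g_memLp 1 (by simp)).integrable le_rfl).abs
  calc _ ≤ ∫ x, lam * |s - 1| * |x| ∂(gaussianReal 0 1) := by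
        refine integral_mono (i1.sub i2).abs (i3.const_mul _) fun x => ?_
        have := hl (s * x) x
        rw [show s * x - x = (s - 1) * x by ring, abs_mul] at this
        simp only
        linarith
    _ = lam * |s - 1| * ∫ x, |x| ∂(gaussianReal 0 1) := integral_const_mul _ _
    _ ≤ lam * |s - 1| * 1 := by gcongr; exact g_abs
    _ = _ := mul_one _

/-- first-moment comparison -/
lemma xmean_cmp {σ : ℝ → ℝ} {lam : ℝ} (hc : Continuous σ)
    (hl : ∀ x y, |σ x - σ y| ≤ lam * |x - y|) (s : ℝ) :
    |(∫ x, x * σ (s * x) ∂(gaussianReal 0 1)) - ∫ x, x * σ x ∂(gaussianReal 0 1)|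
      ≤ lam * |s - 1| := by
  have i1 : Integrable (fun x => x * σ (s * x)) (gaussianReal 0 1) :=
    (g_memLp 2 (by simp)).integrable_mul (lip_memLp0 hc hl s 2 (by simp))
  have i2 : Integrable (fun x => x * σ (1 * x)) (gaussianReal 0 1) :=
    (g_memLp 2 (by simp)).integrable_mul (lip_memLp0 hc hl 1 2 (by simp))
  simp only [one_mul] at i2
  rw [← integral_sub i1 i2]
  refine (abs_integral_le_integral_abs).trans ?_
  calc _ ≤ ∫ x, lam * |s - 1| * x ^ 2 ∂(gaussianReal 0 1) := by
        refine integral_mono (i1.sub i2).abs ((g_pow_int 2).const_mul _) fun x => ?_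
        have := hl (s * x) x
        rw [show s * x - x = (s - 1) * x by ring, abs_mul] at this
        simp only
        rw [show x * σ (s * x) - x * σ x = x * (σ (s * x) - σ x) by ring, abs_mul, ← sq_abs x]
        nlinarith [abs_nonneg x]
    _ = lam * |s - 1| := by rw [integral_const_mul, g_sq, mul_one]

/-- second-moment comparison -/
lemma sq_cmp {σ : ℝ → ℝ} {lam : ℝ} (hc : Continuous σ)
    (hl : ∀ x y, |σ x - σ y| ≤ lam * |x - y|) (hlam : 0 ≤ lam) (s : ℝ)
    (h1 : ∫ x, σ x ^ 2 ∂(gaussianReal 0 1) = 1) :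
    |(∫ x, σ (s * x) ^ 2 ∂(gaussianReal 0 1)) - 1|
      ≤ 2 * (lam * |s - 1|) + (lam * |s - 1|) ^ 2 := by
  have m1 := lip_memLp0 hc hl s 2 (by simp)
  have m2 := lip_memLp0 hc hl 1 2 (by simp)
  simp only [one_mul] at m2
  have i2 := m2.integrable_sq
  have mD : MemLp (fun x => σ (s * x) - σ x) 2 (gaussianReal 0 1) := m1.sub m2
  have iD := mD.integrable_sq
  have iX : Integrable (fun x => σ x * (σ (s * x) - σ x)) (gaussianReal 0 1) :=
    m2.integrable_mul mD
  set D := ∫ x, (σ (s * x) - σ x) ^ 2 ∂(gaussianReal 0 1) with hD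
  set K := lam * |s - 1| with hK
  have hK0 : 0 ≤ K := by positivity
  have hDb : D ≤ K ^ 2 := by
    calc D ≤ ∫ x, K ^ 2 * x ^ 2 ∂(gaussianReal 0 1) := by
          refine integral_mono iD ((g_pow_int 2).const_mul _) fun x => ?_
          have := hl (s * x) x
          rw [show s * x - x = (s - 1) * x by ring, abs_mul, ← mul_assoc] at this
          have h2 := pow_le_pow_left₀ (abs_nonneg _) this 2
          rw [sq_abs, mul_pow, sq_abs x] at h2
          exact h2
      _ = K ^ 2 := by rw [integral_const_mul, g_sq, mul_one]
  have hD0 : 0 ≤ D := integral_nonneg fun x => sq_nonneg _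
  set Y := ∫ x, σ x * (σ (s * x) - σ x) ∂(gaussianReal 0 1) with hY
  have hexp : ∀ r : ℝ, ∫ x, (r * σ x + (σ (s * x) - σ x)) ^ 2 ∂(gaussianReal 0 1)
      = r ^ 2 + 2 * r * Y + D := by
    intro r
    have : ∀ x, (r * σ x + (σ (s * x) - σ x)) ^ 2
        = r ^ 2 * σ x ^ 2 + (2 * r) * (σ x * (σ (s * x) - σ x)) + (σ (s * x) - σ x) ^ 2 := by
      intro x; ring
    simp only [this]
    have iS : Integrable (fun x => r ^ 2 * σ x ^ 2 + (2 * r) * (σ x * (σ (s * x) - σ x)))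
        (gaussianReal 0 1) := (i2.const_mul _).add (iX.const_mul _)
    rw [integral_add iS iD,
      integral_add (i2.const_mul _) (iX.const_mul _), integral_const_mul, integral_const_mul, h1,
      mul_one]
  have hpos : ∀ r : ℝ, 0 ≤ r ^ 2 + 2 * r * Y + D := fun r => by
    rw [← hexp]; exact integral_nonneg fun x => sq_nonneg _
  have hYb : Y ^ 2 ≤ K ^ 2 := by
    have := hpos (-Y); nlinarith
  have hYK : |Y| ≤ K := abs_le_of_sq_le_sq hYb hK0
  have e := hexp 1
  simp only [one_mul, add_sub_cancel] at e
  rw [e]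
  have := abs_le.1 hYK
  rw [abs_le]
  constructor <;> nlinarith

lemma one_le_lam {σ : ℝ → ℝ} {lam : ℝ} (hc : Continuous σ)
    (hl : ∀ x y, |σ x - σ y| ≤ lam * |x - y|) (hlam : 0 ≤ lam)
    (h0 : ∫ x, σ x ∂(gaussianReal 0 1) = 0)
    (h1 : ∫ x, σ x ^ 2 ∂(gaussianReal 0 1) = 1) : 1 ≤ lam := by
  have m2 := lip_memLp0 hc hl 1 2 (by simp)
  simp only [one_mul] at m2
  have i2 := m2.integrable_sq
  have i1 := m2.integrable (by simp)
  have e : ∫ x, (σ x - σ 0) ^ 2 ∂(gaussianReal 0 1) = 1 + σ 0 ^ 2 := by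
    have : ∀ x, (σ x - σ 0) ^ 2 = σ x ^ 2 - (2 * σ 0) * σ x + σ 0 ^ 2 := by intro x; ring
    simp only [this]
    have iS : Integrable (fun x => σ x ^ 2 - (2 * σ 0) * σ x)
        (gaussianReal 0 1) := i2.sub (i1.const_mul _)
    rw [integral_add iS (integrable_const _),
      integral_sub i2 (i1.const_mul _), integral_const_mul, h0, h1]
    simp
  have b : ∫ x, (σ x - σ 0) ^ 2 ∂(gaussianReal 0 1) ≤ ∫ x, lam ^ 2 * x ^ 2 ∂(gaussianReal 0 1) := by
    refine integral_mono (m2.sub (memLp_const (σ 0))).integrable_sq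
      ((g_pow_int 2).const_mul _) fun x => ?_
    have := pow_le_pow_left₀ (abs_nonneg _) (hl x 0) 2
    rw [sub_zero, sq_abs, mul_pow, sq_abs x] at this
    exact this
  rw [e, integral_const_mul, g_sq] at b
  nlinarith [sq_nonneg (σ 0)]

lemma stein {σ σ' : ℝ → ℝ} {lam : ℝ} (h1 : ∀ x, HasDerivAt σ (σ' x) x)
    (hc' : Continuous σ') (hb : ∀ x, |σ' x| ≤ lam) :
    ∫ x, x * σ x ∂(gaussianReal 0 1) = ∫ x, σ' x ∂(gaussianReal 0 1) := by
  have hc : Continuous σ := continuous_iff_continuousAt.2 fun x => (h1 x).continuousAt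
  have hl := lip_bound h1 hb
  have m2 := lip_memLp0 hc hl 1 2 (by simp)
  simp only [one_mul] at m2
  have iX : Integrable (fun x => x * σ x) (gaussianReal 0 1) :=
    (g_memLp 2 (by simp)).integrable_mul m2
  have i1 := m2.integrable (by simp)
  have i' : Integrable σ' (gaussianReal 0 1) :=
    (integrable_const lam).mono' hc'.aestronglyMeasurable (Eventually.of_forall hb)
  have tr : ∀ f : ℝ → ℝ, Integrable f (gaussianReal 0 1) →
      Integrable (fun x => f x * gaussianPDFReal 0 1 x) := by
    intro f hf
    rw [gaussianReal_of_var_ne_zero _ one_ne_zero,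
      integrable_withDensity_iff (measurable_gaussianPDF _ _)
        (Eventually.of_forall fun _ => gaussianPDF_lt_top)] at hf
    simpa using hf
  have hd : ∀ x, HasDerivAt (gaussianPDFReal 0 1) (-x * gaussianPDFReal 0 1 x) x := by
    intro x
    have : HasDerivAt (fun x : ℝ => -(x - 0) ^ 2 / (2 * ((1 : NNReal) : ℝ))) (-x) x := by
      have := ((((hasDerivAt_id x).sub_const 0).pow 2).neg).div_const (2 * ((1 : NNReal) : ℝ))
      refine this.congr_deriv ?_
      simp
      ring
    have h2 := (this.exp).const_mul (√(2 * Real.pi * ((1 : NNReal) : ℝ)))⁻¹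
    refine h2.congr_deriv ?_
    rw [gaussianPDFReal_def]; ring
  have key := integral_mul_deriv_eq_deriv_mul_of_integrable (u := σ) (u' := σ')
    (v := gaussianPDFReal 0 1) (v' := fun x => -x * gaussianPDFReal 0 1 x)
    (fun x _ => h1 x) (fun x _ => hd x)
    (by
      have := (tr _ iX).neg
      refine this.congr (Eventually.of_forall fun x => ?_)
      simp; ring) (tr _ i') (tr _ i1)
  rw [integral_gaussianReal_eq_integral_smul one_ne_zero,
    integral_gaussianReal_eq_integral_smul one_ne_zero]
  have e1 : ∫ x, σ x * (-x * gaussianPDFReal 0 1 x)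
      = - ∫ x, gaussianPDFReal 0 1 x • (x * σ x) := by
    rw [← integral_neg]; congr 1; funext x; simp only [smul_eq_mul]; ring
  rw [e1, neg_inj] at key
  rw [key]; congr 1; funext x; simp only [smul_eq_mul]; ring

lemma pair_bound {σ σ' σ'' : ℝ → ℝ} {lam : ℝ} (h1 : ∀ x, HasDerivAt σ (σ' x) x)
    (h2 : ∀ x, HasDerivAt σ' (σ'' x) x) (hb1 : ∀ x, |σ' x| ≤ lam) (hb2 : ∀ x, |σ'' x| ≤ lam)
    (s p q : ℝ) :
    |(∫ x, σ (s * x.1) * σ (p * x.1 + q * x.2) ∂((gaussianReal 0 1).prod (gaussianReal 0 1)))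
      - (∫ x, σ (s * x) ∂(gaussianReal 0 1)) * (∫ x, σ (q * x) ∂(gaussianReal 0 1))
      - p * ((∫ x, x * σ (s * x) ∂(gaussianReal 0 1)) * ∫ x, σ' (q * x) ∂(gaussianReal 0 1))|
    ≤ lam * p ^ 2 * (((∫ x, σ (s * x) ^ 2 ∂(gaussianReal 0 1))
        + ∫ x, x ^ 4 ∂(gaussianReal 0 1)) / 2) := by
  have hc : Continuous σ := continuous_iff_continuousAt.2 fun x => (h1 x).continuousAt
  have hc' : Continuous σ' := continuous_iff_continuousAt.2 fun x => (h2 x).continuousAt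
  have hlam : 0 ≤ lam := (abs_nonneg _).trans (hb2 0)
  have hl := lip_bound h1 hb1
  have hl' := lip_bound h2 hb2
  have m2 := lip_memLp0 hc hl s 2 (by simp)
  have iX : Integrable (fun x => x * σ (s * x)) (gaussianReal 0 1) :=
    (g_memLp 2 (by simp)).integrable_mul m2
  have i1 := m2.integrable (by simp)
  have iq := (lip_memLp0 hc hl q 1 (by simp)).integrable le_rfl
  have iq' := (lip_memLp0 hc' hl' q 1 (by simp)).integrable le_rfl
  have I1 := i1.mul_prod iq
  have I2 := iX.mul_prod iq'
  have iG : Integrable (fun x => lam * p ^ 2 * ((σ (s * x) ^ 2 + x ^ 4) / 2)) (gaussianReal 0 1) :=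
    ((m2.integrable_sq.add (g_pow_int 4)).div_const 2).const_mul _
  have IG : Integrable (fun x : ℝ × ℝ => lam * p ^ 2 * ((σ (s * x.1) ^ 2 + x.1 ^ 4) / 2))
      ((gaussianReal 0 1).prod (gaussianReal 0 1)) := iG.comp_fst _
  let R : ℝ × ℝ → ℝ := fun x => σ (s * x.1) * (σ (p * x.1 + q * x.2) - σ (q * x.2)
    - (p * x.1) * σ' (q * x.2))
  have hRb : ∀ x, ‖R x‖ ≤ lam * p ^ 2 * ((σ (s * x.1) ^ 2 + x.1 ^ 4) / 2) := by
    intro x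
    have ht := taylor_bound h1 h2 hb2 (q * x.2) (p * x.1)
    simp only [R, Real.norm_eq_abs, abs_mul]
    have e := two_mul_le_add_sq |σ (s * x.1)| (x.1 ^ 2)
    rw [sq_abs] at e
    calc _ ≤ |σ (s * x.1)| * (lam * (p * x.1) ^ 2) := by gcongr
      _ = lam * p ^ 2 * ((2 * |σ (s * x.1)| * x.1 ^ 2) / 2) := by ring
      _ ≤ lam * p ^ 2 * ((σ (s * x.1) ^ 2 + (x.1 ^ 2) ^ 2) / 2) := by gcongr
      _ = _ := by ring
  have hRm : AEStronglyMeasurable R ((gaussianReal 0 1).prod (gaussianReal 0 1)) := by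
    have : Continuous R := by simp only [R]; fun_prop
    exact this.aestronglyMeasurable
  have IR := IG.mono' hRm (Eventually.of_forall hRb)
  have hb := norm_integral_le_of_norm_le IG (Eventually.of_forall hRb)
  have eG : ∫ x : ℝ × ℝ, lam * p ^ 2 * ((σ (s * x.1) ^ 2 + x.1 ^ 4) / 2)
      ∂((gaussianReal 0 1).prod (gaussianReal 0 1))
      = lam * p ^ 2 * (((∫ x, σ (s * x) ^ 2 ∂(gaussianReal 0 1))
        + ∫ x, x ^ 4 ∂(gaussianReal 0 1)) / 2) := by
    rw [integral_fun_fst (fun x => lam * p ^ 2 * ((σ (s * x) ^ 2 + x ^ 4) / 2)),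
      integral_const_mul, integral_div, integral_add m2.integrable_sq (g_pow_int 4)]
    simp
  rw [eG] at hb
  have eF : ∀ x : ℝ × ℝ, σ (s * x.1) * σ (p * x.1 + q * x.2)
      = σ (s * x.1) * σ (q * x.2) + p * ((x.1 * σ (s * x.1)) * σ' (q * x.2)) + R x := by
    intro x; simp only [R]; ring
  simp only [eF]
  have IS : Integrable (fun x : ℝ × ℝ => σ (s * x.1) * σ (q * x.2)
      + p * ((x.1 * σ (s * x.1)) * σ' (q * x.2)))
      ((gaussianReal 0 1).prod (gaussianReal 0 1)) := I1.add (I2.const_mul p)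
  rw [integral_add IS IR, integral_add I1 (I2.const_mul p), integral_const_mul,
    integral_prod_mul (fun x => σ (s * x)) (fun x => σ (q * x)),
    integral_prod_mul (fun x => x * σ (s * x)) (fun x => σ' (q * x))]
  convert hb using 2
  rw [Real.norm_eq_abs]
  congr 1; ring

lemma sqrt_sub_one {t : ℝ} (ht : 0 ≤ t) : |√t - 1| ≤ |t - 1| := by
  have h := Real.sq_sqrt ht
  have h0 := Real.sqrt_nonneg t
  have e : t - 1 = (√t - 1) * (√t + 1) := by linear_combination -h
  rw [e, abs_mul, abs_of_pos (by linarith : 0 < √t + 1)]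
  nlinarith [abs_nonneg (√t - 1)]

lemma alg_bound {lam ε p s b bq ks M ms mq g Φ : ℝ} (hlam : 1 ≤ lam) (hε : 0 ≤ ε)
    (hM : 0 ≤ M) (hp : |p| ≤ 2 * ε)
    (hs : |s - 1| ≤ ε) (hb : |b| ≤ lam) (hbq : |bq| ≤ lam) (h1 : |bq - b| ≤ lam * (3 * ε))
    (h2 : |ks - b| ≤ lam * ε) (h3 : |ms| ≤ lam * ε) (h4 : |mq| ≤ lam * (3 * ε)) (hg : g ≤ 4)
    (hΦ : |Φ - ms * mq - p * (ks * bq)| ≤ lam * p ^ 2 * ((g + M) / 2)) :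
    |Φ - b ^ 2 * (p * s)| ≤ (30 + 2 * M) * lam ^ 2 * ε ^ 2 := by
  have a1 : |ms * mq| ≤ (lam * ε) * (lam * (3 * ε)) := by
    rw [abs_mul]; gcongr
  have a2 : |ks * bq - b ^ 2 * s| ≤ 5 * lam ^ 2 * ε := by
    have e : ks * bq - b ^ 2 * s = (ks - b) * bq + b * (bq - b) - b * b * (s - 1) := by ring
    rw [e]
    have t1 : |(ks - b) * bq| ≤ (lam * ε) * lam := by rw [abs_mul]; gcongr
    have t2 : |b * (bq - b)| ≤ lam * (lam * (3 * ε)) := by rw [abs_mul]; gcongr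
    have t3 : |b * b * (s - 1)| ≤ lam * lam * ε := by rw [abs_mul, abs_mul]; gcongr
    refine (abs_sub _ _).trans ?_
    have := abs_add_le ((ks - b) * bq) (b * (bq - b))
    nlinarith
  have a3 : |p * (ks * bq - b ^ 2 * s)| ≤ 2 * ε * (5 * lam ^ 2 * ε) := by
    rw [abs_mul]; gcongr
  have a4 : lam * p ^ 2 * ((g + M) / 2) ≤ lam ^ 2 * (2 * ε) ^ 2 * ((4 + M) / 2) := by
    have hp2 : p ^ 2 ≤ (2 * ε) ^ 2 := by rw [← sq_abs p]; gcongr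
    have : lam ≤ lam ^ 2 := by nlinarith
    calc _ ≤ lam * p ^ 2 * ((4 + M) / 2) := by gcongr
      _ ≤ _ := by gcongr
  have e : Φ - b ^ 2 * (p * s) = (Φ - ms * mq - p * (ks * bq)) + ms * mq
      + p * (ks * bq - b ^ 2 * s) := by ring
  rw [e]
  refine (abs_add_le _ _).trans ?_
  have := abs_add_le (Φ - ms * mq - p * (ks * bq)) (ms * mq)
  nlinarith [mul_nonneg (sq_nonneg lam) (sq_nonneg ε)]

lemma offdiag {d : ℕ} (x y : Fin d → ℝ) {σ σ' σ'' : ℝ → ℝ} {lam ε : ℝ}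
    (h1 : ∀ x, HasDerivAt σ (σ' x) x)
    (h2 : ∀ x, HasDerivAt σ' (σ'' x) x) (hb1 : ∀ x, |σ' x| ≤ lam) (hb2 : ∀ x, |σ'' x| ≤ lam)
    (hm : ∫ x, σ x ∂(gaussianReal 0 1) = 0) (hv : ∫ x, σ x ^ 2 ∂(gaussianReal 0 1) = 1)
    (hx : |∑ i, x i ^ 2 - 1| ≤ ε) (hy : |∑ i, y i ^ 2 - 1| ≤ ε) (hxy : |∑ i, x i * y i| ≤ ε)
    (hε : lam * ε < 1) :
    |(∫ w, σ (∑ i, w i * x i) * σ (∑ i, w i * y i) ∂(gaussianVec d)) -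
      (∫ x, σ' x ∂(gaussianReal 0 1)) ^ 2 * ∑ i, x i * y i|
      ≤ (30 + 2 * ∫ x, x ^ 4 ∂(gaussianReal 0 1)) * lam ^ 2 * ε ^ 2 := by
  have hc : Continuous σ := continuous_iff_continuousAt.2 fun x => (h1 x).continuousAt
  have hc' : Continuous σ' := continuous_iff_continuousAt.2 fun x => (h2 x).continuousAt
  have hlam0 : 0 ≤ lam := (abs_nonneg _).trans (hb2 0)
  have hl := lip_bound h1 hb1
  have hl' := lip_bound h2 hb2
  have hlam := one_le_lam hc hl hlam0 hm hv
  have hε0 : 0 ≤ ε := (abs_nonneg _).trans hx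
  have hM : 0 ≤ ∫ x, x ^ 4 ∂(gaussianReal 0 1) := integral_nonneg fun x => by positivity
  have hA0 : 0 ≤ ∑ i, x i ^ 2 := Finset.sum_nonneg fun i _ => sq_nonneg _
  have hB0 : 0 ≤ ∑ i, y i ^ 2 := Finset.sum_nonneg fun i _ => sq_nonneg _
  have hs := (sqrt_sub_one hA0).trans hx
  have ht := (sqrt_sub_one hB0).trans hy
  have hbb : ∀ q : ℝ, |∫ x, σ' (q * x) ∂(gaussianReal 0 1)| ≤ lam := by
    intro q
    have := norm_integral_le_of_norm_le_const (μ := gaussianReal 0 1) (C := lam)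
      (f := fun x => σ' (q * x)) (Eventually.of_forall fun x => hb1 _)
    simpa using this
  have hb : |∫ x, σ' x ∂(gaussianReal 0 1)| ≤ lam := by simpa using hbb 1
  have hg : ∀ s : ℝ, |s - 1| ≤ ε → ∫ x, σ (s * x) ^ 2 ∂(gaussianReal 0 1) ≤ 4 := by
    intro s hs
    have := (abs_le.1 (sq_cmp hc hl hlam0 s hv)).2
    have h3 : lam * |s - 1| ≤ 1 := by
      have : lam * |s - 1| ≤ lam * ε := by gcongr
      linarith
    have h4 : 0 ≤ lam * |s - 1| := by positivity
    nlinarith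
  by_cases hε2 : 1 / 2 ≤ ε
  · have mm : ∀ a : Fin d → ℝ, MemLp (fun w : Fin d → ℝ => σ (∑ i, w i * a i)) 2 (gaussianVec d) := by
      intro a
      have := lip_memLp0 hc hl (√(∑ i, a i ^ 2)) 2 (by simp)
      have h5 : MemLp σ 2 ((gaussianReal 0 1).map (fun x => √(∑ i, a i ^ 2) * x)) := by
        rw [memLp_map_measure_iff hc.aestronglyMeasurable (by fun_prop)]
        exact this
      rw [← gv_map a, memLp_map_measure_iff hc.aestronglyMeasurable (gv_meas a).aemeasurable] at h5
      exact h5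
    have g1 := gv_integral x (fun u => σ u ^ 2) (by fun_prop)
    have g2 := gv_integral y (fun u => σ u ^ 2) (by fun_prop)
    have k1 := hg _ hs
    have k2 := hg _ ht
    rw [← g1] at k1
    rw [← g2] at k2
    have j1 := (mm x).integrable_sq
    have j2 := (mm y).integrable_sq
    have B1 : |∫ w, σ (∑ i, w i * x i) * σ (∑ i, w i * y i) ∂(gaussianVec d)| ≤ 4 := by
      have := norm_integral_le_of_norm_le (μ := gaussianVec d)
        (f := fun w => σ (∑ i, w i * x i) * σ (∑ i, w i * y i)) ((j1.add j2).div_const 2)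
        (Eventually.of_forall fun w => by
          rw [Real.norm_eq_abs, abs_mul]
          have := two_mul_le_add_sq |σ (∑ i, w i * x i)| |σ (∑ i, w i * y i)|
          rw [sq_abs, sq_abs] at this
          simp only [Pi.add_apply]
          linarith)
      rw [Real.norm_eq_abs, integral_div] at this
      simp only [Pi.add_apply] at this
      rw [integral_add j1 j2] at this
      linarith
    have B2 : |(∫ x, σ' x ∂(gaussianReal 0 1)) ^ 2 * ∑ i, x i * y i| ≤ lam ^ 2 * ε := by
      rw [abs_mul, abs_pow]; gcongr
    refine (abs_sub _ _).trans ?_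
    have B3 : 1 ≤ lam ^ 2 := by nlinarith
    have B4 : ε ≤ 2 * ε ^ 2 := by nlinarith
    have B5 : 1 ≤ 4 * ε ^ 2 := by nlinarith
    have B6 : 1 ≤ lam ^ 2 * (4 * ε ^ 2) := by nlinarith
    have B7 : lam ^ 2 * ε ≤ lam ^ 2 * (2 * ε ^ 2) := by gcongr
    have B8 : 0 ≤ (∫ x, x ^ 4 ∂(gaussianReal 0 1)) * (lam ^ 2 * ε ^ 2) := by positivity
    nlinarith
  · push Not at hε2
    set A := ∑ i, x i ^ 2 with hA
    set c := ∑ i, x i * y i with hcdef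
    have hA2 : 1 / 2 ≤ A := by have := (abs_le.1 hx).1; linarith
    set s := √A with hsdef
    have hss : s ^ 2 = A := Real.sq_sqrt hA0
    have hs2 : 1 / 2 ≤ s := by have := (abs_le.1 hs).1; linarith
    have hs0 : s ≠ 0 := by linarith
    have hA00 : A ≠ 0 := by linarith
    let z : Fin d → ℝ := fun i => y i - c / A * x i
    have hxz : ∑ i, x i * z i = 0 := by
      have : ∀ i, x i * z i = x i * y i - c / A * x i ^ 2 := fun i => by simp only [z]; ring
      simp only [this]
      rw [Finset.sum_sub_distrib, ← Finset.mul_sum, ← hA, ← hcdef]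
      field_simp; ring
    have hzz : ∑ i, z i ^ 2 = ∑ i, y i ^ 2 - c ^ 2 / A := by
      have : ∀ i, z i ^ 2 = y i ^ 2 - 2 * (c / A) * (x i * y i) + (c / A) ^ 2 * x i ^ 2 :=
        fun i => by simp only [z]; ring
      simp only [this]
      rw [Finset.sum_add_distrib, Finset.sum_sub_distrib, ← Finset.mul_sum, ← Finset.mul_sum,
        ← hA, ← hcdef]
      field_simp; ring
    have hc2 : c ^ 2 ≤ ε ^ 2 := by rw [← sq_abs c]; gcongr
    have hcA : c ^ 2 / A ≤ ε := by
      rw [div_le_iff₀ (by linarith)]; nlinarith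
    have hcA0 : 0 ≤ c ^ 2 / A := by positivity
    have hZ0 : 0 ≤ ∑ i, z i ^ 2 := Finset.sum_nonneg fun i _ => sq_nonneg _
    have hq : |√(∑ i, z i ^ 2) - 1| ≤ 3 * ε := by
      refine (sqrt_sub_one hZ0).trans ?_
      rw [hzz]
      have := abs_le.1 hy
      rw [abs_le]; constructor <;> linarith
    have hp : |c / s| ≤ 2 * ε := by
      rw [abs_div, abs_of_pos (by linarith : 0 < s), div_le_iff₀ (by linarith)]
      nlinarith
    have hΦ : ∫ w, σ (∑ i, w i * x i) * σ (∑ i, w i * y i) ∂(gaussianVec d)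
        = ∫ u, σ (s * u.1) * σ (c / s * u.1 + √(∑ i, z i ^ 2) * u.2)
          ∂((gaussianReal 0 1).prod (gaussianReal 0 1)) := by
      have := gv_integral_pair x z hxz (fun u => σ u.1 * σ (c / A * u.1 + u.2)) (by fun_prop)
      simp only at this
      rw [← hA, ← hsdef] at this
      have e1 : ∀ w : Fin d → ℝ, c / A * (∑ i, w i * x i) + ∑ i, w i * z i = ∑ i, w i * y i := by
        intro w
        rw [Finset.mul_sum, ← Finset.sum_add_distrib]
        refine Finset.sum_congr rfl fun i _ => ?_
        simp only [z]; ring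
      have e2 : ∀ u : ℝ, c / A * (s * u) = c / s * u := by
        intro u; rw [← hss]; field_simp
      simp only [e1, e2] at this
      exact this
    have hPB := pair_bound h1 h2 hb1 hb2 s (c / s) (√(∑ i, z i ^ 2))
    rw [← hΦ] at hPB
    have hk := xmean_cmp hc hl s
    rw [stein h1 hc' hb1] at hk
    have hms := mean_cmp hc hl hlam0 s
    have hmq := mean_cmp hc hl hlam0 (√(∑ i, z i ^ 2))
    rw [hm, sub_zero] at hms hmq
    have hbq := mean_cmp hc' hl' hlam0 (√(∑ i, z i ^ 2))
    have w1 : lam * |s - 1| ≤ lam * ε := by gcongr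
    have w2 : lam * |√(∑ i, z i ^ 2) - 1| ≤ lam * (3 * ε) := by gcongr
    have fin := alg_bound hlam hε0 hM hp hs hb (hbb _) (hbq.trans w2) (hk.trans w1)
      (hms.trans w1) (hmq.trans w2) (hg s hs) hPB
    rwa [div_mul_cancel₀ _ hs0] at fin

theorem phi_entry_bounds :
    ∃ C : ℝ, 0 < C ∧
      ∀ (d n : ℕ) (X : Matrix (Fin d) (Fin n) ℝ) (ε B lamσ : ℝ)
        (σ σ' σ'' : ℝ → ℝ),
        (∀ x, HasDerivAt σ (σ' x) x) →
        (∀ x, HasDerivAt σ' (σ'' x) x) →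
        (∀ x, |σ' x| ≤ lamσ) →
        (∀ x, |σ'' x| ≤ lamσ) →
        (∫ x, σ x ∂stdGaussian) = 0 →
        (∫ x, (σ x) ^ 2 ∂stdGaussian) = 1 →
        IsOrthonormal ε B X →
        ε < 1 / lamσ →
        -- (i) off-diagonal entries of Φ
        (∀ α β : Fin n, α ≠ β →
          |(∫ w, σ (∑ i, w i * X i α) * σ (∑ i, w i * X i β) ∂gaussianVec d) -
              (∫ x, σ' x ∂stdGaussian) ^ 2 * ∑ i, X i α * X i β| ≤
            C * lamσ ^ 2 * ε ^ 2) ∧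
        -- (ii) means of the post-activations
        (∀ α : Fin n,
          |∫ w, σ (∑ i, w i * X i α) ∂gaussianVec d| ≤
              C * lamσ * |(∑ i, X i α ^ 2) - 1| ∧
            C * lamσ * |(∑ i, X i α ^ 2) - 1| ≤ C * lamσ * ε) ∧
        -- (iii) diagonal entries of Φ
        (∀ α : Fin n,
          |(∫ w, σ (∑ i, w i * X i α) * σ (∑ i, w i * X i α) ∂gaussianVec d) - 1| ≤
              C * lamσ * |(∑ i, X i α ^ 2) - 1| ∧
            C * lamσ * |(∑ i, X i α ^ 2) - 1| ≤ C * lamσ * ε) := by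
  have hM : 0 ≤ ∫ x, x ^ 4 ∂(gaussianReal 0 1) := integral_nonneg fun x => by positivity
  refine ⟨30 + 2 * ∫ x, x ^ 4 ∂(gaussianReal 0 1), by linarith, ?_⟩
  intro d n X ε B lam σ σ' σ'' h1 h2 hb1 hb2 hm hv hX hε
  obtain ⟨hX1, hX2, -, -⟩ := hX
  have hc : Continuous σ := continuous_iff_continuousAt.2 fun x => (h1 x).continuousAt
  have hlam0 : 0 ≤ lam := (abs_nonneg _).trans (hb2 0)
  have hl := lip_bound h1 hb1
  have hlam := one_le_lam hc hl hlam0 hm hv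
  have hε' : lam * ε < 1 := by
    rw [lt_div_iff₀ (by linarith)] at hε; linarith
  set C := 30 + 2 * ∫ x, x ^ 4 ∂(gaussianReal 0 1) with hC
  have hC30 : 30 ≤ C := by linarith
  have hsq : ∀ α : Fin n, lam * |√(∑ i, X i α ^ 2) - 1| ≤ lam * |∑ i, X i α ^ 2 - 1| := by
    intro α
    have := sqrt_sub_one (Finset.sum_nonneg fun i (_ : i ∈ Finset.univ) => sq_nonneg (X i α))
    gcongr
  have hlast : ∀ α : Fin n, C * lam * |(∑ i, X i α ^ 2) - 1| ≤ C * lam * ε := by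
    intro α
    have := hX1 α
    gcongr
  refine ⟨fun α β hαβ => ?_, fun α => ⟨?_, hlast α⟩, fun α => ⟨?_, hlast α⟩⟩
  · exact offdiag (fun i => X i α) (fun i => X i β) h1 h2 hb1 hb2 hm hv (hX1 α) (hX1 β)
      (hX2 α β hαβ) hε'
  · rw [gv_integral (fun i => X i α) σ hc]
    have h := mean_cmp hc hl hlam0 (√(∑ i, X i α ^ 2))
    rw [show ∫ x, σ x ∂(gaussianReal 0 1) = 0 from hm, sub_zero] at h
    have h3 := hsq α
    have h4 : 0 ≤ lam * |(∑ i, X i α ^ 2) - 1| := by positivity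
    rw [mul_assoc]
    nlinarith
  · have e := gv_integral (fun i => X i α) (fun u => σ u * σ u) (by fun_prop)
    beta_reduce at e
    rw [e]
    have h := sq_cmp hc hl hlam0 (√(∑ i, X i α ^ 2)) hv
    have esq : ∀ u : ℝ, σ u ^ 2 = σ u * σ u := fun u => sq _
    simp only [esq] at h
    have h3 := hsq α
    have h4 : 0 ≤ lam * |(∑ i, X i α ^ 2) - 1| := by positivity
    have h5 : lam * |(∑ i, X i α ^ 2) - 1| ≤ lam * ε := by
      have := hX1 α
      gcongr
    have h6 : 0 ≤ lam * |√(∑ i, X i α ^ 2) - 1| := by positivity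
    refine h.trans ?_
    rw [mul_assoc]
    nlinarith
end
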